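/- Suppose n ≥ 100k² and F, G ⊆ binom([n],k) are cross-intersecting families. Then |I(F, G)| ≤ |I(A1, A2)|. -/

import Mathlib

open Finset

def ground (n : ℕ) : Finset ℕ := Finset.Icc 1 n

def ksets (n k : ℕ) : Finset (Finset ℕ) := (ground n).powersetCard k

def starF (n k : ℕ) (T : Finset ℕ) : Finset (Finset ℕ) :=
  (ksets n k).filter fun S => T ⊆ S

def meet (A B : Finset (Finset ℕ)) : Finset (Finset ℕ) :=
  (A ×ˢ B).image fun p => p.1 ∩ p.2

def dInt (A B : Finset (Finset ℕ)) : Finset (Finset ℕ) :=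
  ((A ×ˢ B).filter fun p => p.1 ≠ p.2).image fun p => p.1 ∩ p.2

def crossInt (A B : Finset (Finset ℕ)) : Prop :=
  ∀ F ∈ A, ∀ G ∈ B, (F ∩ G).Nonempty

open Classical in
noncomputable def nu (A : Finset (Finset ℕ)) : ℕ :=
  (A.powerset.filter fun M : Finset (Finset ℕ) =>
    (↑M : Set (Finset ℕ)).PairwiseDisjoint id).sup Finset.card

def transv (n k : ℕ) (H : Finset (Finset ℕ)) : Finset (Finset ℕ) :=
  (ground n).powerset.filter fun T => T.card ≤ k ∧ ∀ h ∈ H, (T ∩ h).Nonempty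

def basis (n k : ℕ) (H : Finset (Finset ℕ)) : Finset (Finset ℕ) :=
  (transv n k H).filter fun b => ∀ b' ∈ transv n k H, b' ⊆ b → b' = b

def tIntersecting (t : ℕ) (A : Finset (Finset ℕ)) : Prop :=
  ∀ F ∈ A, ∀ F' ∈ A, t ≤ (F ∩ F').card

def ttransv (n k t : ℕ) (H : Finset (Finset ℕ)) : Finset (Finset ℕ) :=
  (ground n).powerset.filter fun T => T.card ≤ k ∧ ∀ h ∈ H, t ≤ (T ∩ h).card

def tbasis (n k t : ℕ) (H : Finset (Finset ℕ)) : Finset (Finset ℕ) :=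
  (ttransv n k t H).filter fun b => ∀ b' ∈ ttransv n k t H, b' ⊆ b → b' = b

def crossSperner (A B : Finset (Finset ℕ)) : Prop :=
  ∀ a ∈ A, ∀ b ∈ B, ¬ a ⊆ b ∧ ¬ b ⊆ a

def A1 (n k : ℕ) : Finset (Finset ℕ) :=
  starF n k {1, 2} ∪ starF n k {3, 4} ∪ starF n k {1, 4, 5} ∪ starF n k {2, 3, 6}

def A2 (n k : ℕ) : Finset (Finset ℕ) :=
  starF n k {1, 3} ∪ starF n k {2, 4} ∪ starF n k {1, 4, 6} ∪ starF n k {2, 3, 5}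

def Ankt (n k t : ℕ) : Finset (Finset ℕ) :=
  (ksets n k).filter fun A => t + 1 ≤ (A ∩ ground (t + 2)).card

/-!
Replace `F` and `G` by a pair `U ⊇ F`, `V ⊇ G` of cross-intersecting families in which each contains
every transversal of the other of size at most `k`, and let `N s` be the number of sets of size at
most `k - s`; since `n ≥ 100 k²`, these numbers drop by a factor `100 k` at each step. The pair
`A1`, `A2` realises every set of size at most `k - 1` meeting `{1, 2, 3, 4}`, together with every
set of size at most `k - 2` that avoids `{1, 2, 3, 4}` and meets `{5, 6}`; the former alone number
at least `3.9 * N 2`.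

If all members of `U`, or all of `V`, share an element, or if the transversals of size less than
some `s ≥ 3` of one of the families share an element, then branching over transversals leaves at
most `3.9 * N 2` intersections. Otherwise the pairs in `U` form a graph with no vertex common to all
edges, and so do the pairs in `V`; as the two graphs cross-intersect, they share a triangle or
contain one perfect matching each of a common 4-cycle. In the first case every intersection meets
the three vertices of the triangle. In the second, let `S` be the vertex set of the cycle: an
intersection missing `S` comes from members of `U` and `V` whose traces on `S` are the two
diagonals, so it is an intersection from one of two cross-intersecting pairs of families outside
`S`. A cross-intersecting pair has few intersections unless these share an element, so those missing
`S` are at most as many as the sets of size at most `k - 2` outside `S` that meet a fixed set of two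
elements.
-/

section

open scoped FinsetFamily

variable {α : Type*} {X Y S T D p q c : Finset α} {x : α}
  {C P Q P' Q' U V 𝒟 : Finset (Finset α)} {a b i j k r s t : ℕ}

/-! ### Subsets of bounded size -/

/-- The subsets `D` of `X` of size at most `k - s`. The bound is written additively, so that there
are none when `k < s`. -/
def smallSubsets (X : Finset α) (k s : ℕ) : Finset (Finset α) := {D ∈ X.powerset | #D + s ≤ k}

theorem mem_smallSubsets : D ∈ smallSubsets X k s ↔ D ⊆ X ∧ #D + s ≤ k := by
  simp only [smallSubsets, mem_filter, mem_powerset]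

theorem mem_smallSubsets_of_subset (h : T ⊆ D) (hD : D ∈ smallSubsets X k s) :
    T ∈ smallSubsets X k s := by
  rw [mem_smallSubsets] at hD ⊢
  exact ⟨h.trans hD.1, (Nat.add_le_add_right (card_le_card h) s).trans hD.2⟩

theorem card_le_of_subset_smallSubsets (hP : P ⊆ smallSubsets X k s) : ∀ p ∈ P, #p ≤ k :=
  fun _ hp => Nat.le_of_add_right_le (mem_smallSubsets.1 (hP hp)).2

theorem smallSubsets_mono_left (h : Y ⊆ X) : smallSubsets Y k s ⊆ smallSubsets X k s := by
  intro D hD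
  rw [mem_smallSubsets] at hD ⊢
  exact ⟨hD.1.trans h, hD.2⟩

theorem card_smallSubsets (X : Finset α) (k s : ℕ) :
    #(smallSubsets X k s) = ∑ j ∈ range (k + 1 - s), (#X).choose j := by
  classical
  have h : smallSubsets X k s = (range (k + 1 - s)).biUnion fun j => X.powersetCard j := by
    ext D
    simp only [mem_smallSubsets, mem_biUnion, mem_range, mem_powersetCard]
    exact ⟨fun h => ⟨#D, by lia, h.1, rfl⟩, fun ⟨j, hj, hD, h⟩ => ⟨hD, by lia⟩⟩
  rw [h, card_biUnion fun i _ j _ hij => X.pairwise_disjoint_powersetCard hij]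
  simp only [card_powersetCard]

theorem card_smallSubsets_succ_mul_le (hX : r * k ^ 2 ≤ #X) (hs : 1 ≤ s) :
    #(smallSubsets X k (s + 1)) * (r * k) ≤ #(smallSubsets X k s) := by
  rw [card_smallSubsets, card_smallSubsets, sum_mul]
  rcases Nat.lt_or_ge k s with h | h
  · simp only [show k + 1 - (s + 1) = 0 by lia, range_zero, sum_empty, zero_le]
  rw [show k + 1 - (s + 1) = k - s by lia, show k + 1 - s = k - s + 1 by lia, sum_range_succ']
  refine le_add_right (sum_le_sum fun j hj => ?_)
  have hjk : j + 2 ≤ k := by have := mem_range.1 hj; lia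
  have hratio : r * k * (j + 1) ≤ #X - j := by
    rcases Nat.eq_zero_or_pos r with rfl | hr
    · simp only [zero_mul, zero_le]
    · have : r * k * (j + 1) + j ≤ r * k ^ 2 :=
        calc r * k * (j + 1) + j ≤ r * k * (j + 1) + r * k := by
              gcongr; exact le_trans (by lia) (Nat.le_mul_of_pos_left k hr)
          _ = r * k * (j + 2) := by ring
          _ ≤ r * k ^ 2 := by rw [sq, ← mul_assoc]; gcongr
      lia
  refine Nat.le_of_mul_le_mul_right ?_ j.succ_pos
  rw [Nat.choose_succ_right_eq, mul_assoc]
  exact Nat.mul_le_mul_left _ hratio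

theorem card_smallSubsets_add_mul_pow_le (hX : r * k ^ 2 ≤ #X) (hs : 1 ≤ s) (i : ℕ) :
    #(smallSubsets X k (s + i)) * (r * k) ^ i ≤ #(smallSubsets X k s) := by
  induction i with
  | zero => simp only [add_zero, pow_zero, mul_one, le_refl]
  | succ i ih =>
    refine le_trans ?_ ih
    rw [pow_succ', ← mul_assoc]
    exact Nat.mul_le_mul_right _ (card_smallSubsets_succ_mul_le hX (by lia))

theorem mul_le_mul_card_smallSubsets {R N : ℕ} (hX : r * k ^ 2 ≤ #X) (hs : 1 ≤ s)
    (hN : N ≤ a * k ^ i * #(smallSubsets X k (s + i))) (hab : R * a ≤ b * r ^ i) :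
    R * N ≤ b * #(smallSubsets X k s) :=
  calc R * N ≤ R * (a * k ^ i * #(smallSubsets X k (s + i))) := Nat.mul_le_mul_left _ hN
    _ = R * a * (k ^ i * #(smallSubsets X k (s + i))) := by ring
    _ ≤ b * r ^ i * (k ^ i * #(smallSubsets X k (s + i))) := Nat.mul_le_mul_right _ hab
    _ = b * (#(smallSubsets X k (s + i)) * (r * k) ^ i) := by rw [mul_pow]; ring
    _ ≤ b * #(smallSubsets X k s) :=
      Nat.mul_le_mul_left _ (card_smallSubsets_add_mul_pow_le hX hs i)

variable [DecidableEq α]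

theorem mem_infs_iff_exists_inter : D ∈ P ⊼ Q ↔ ∃ p ∈ P, ∃ q ∈ Q, p ∩ q = D :=
  mem_infs

theorem infs_subset_smallSubsets (hP : P ⊆ smallSubsets X k s) :
    P ⊼ Q ⊆ smallSubsets X k s :=
  infs_subset_iff.2 fun _ hp _ _ => mem_smallSubsets_of_subset inter_subset_left (hP hp)

/-! ### Uniform covers -/

/-- Every member of `P` contains a member of `C`, and all members of `C` have size `s`. The size
of a family is estimated through the elements that its members have outside such a cover. -/
structure IsUniformCover (C : Finset (Finset α)) (s : ℕ) (P : Finset (Finset α)) : Prop where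
  card_eq : ∀ c ∈ C, #c = s
  exists_subset : ∀ p ∈ P, ∃ c ∈ C, c ⊆ p

theorem card_le_of_traces (𝒜 : Finset α → Finset (Finset α)) (hC : ∀ c ∈ C, #c = s)
    (h𝒜 : ∀ c ∈ C, #(𝒜 c) ≤ a)
    (h𝒟 : ∀ D ∈ 𝒟, D ⊆ X ∧ ∃ c ∈ C, D ∩ c ∈ 𝒜 c ∧ #(D ∪ c) + t ≤ k) :
    #𝒟 ≤ #C * (a * #(smallSubsets X k (t + s))) := by
  have hsub : 𝒟 ⊆ C.biUnion fun c =>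
      (𝒜 c ×ˢ smallSubsets X k (t + s)).image fun E => E.1 ∪ E.2 := by
    intro D hD
    obtain ⟨hDX, c, hc, htrace, hcard⟩ := h𝒟 D hD
    have := card_sdiff_add_card D c
    have := hC c hc
    refine mem_biUnion.2 ⟨c, hc, mem_image.2 ⟨(D ∩ c, D \ c), mem_product.2 ⟨htrace, ?_⟩, ?_⟩⟩
    · exact mem_smallSubsets.2 ⟨sdiff_subset.trans hDX, by lia⟩
    · rw [union_comm, sdiff_union_inter]
  refine (card_le_card hsub).trans (card_biUnion_le_card_mul _ _ _ fun c hc => ?_)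
  refine card_image_le.trans ?_
  rw [card_product]
  exact Nat.mul_le_mul_right _ (h𝒜 c hc)

omit [DecidableEq α] in
theorem IsUniformCover.card_le (hC : IsUniformCover C s P) (hP : P ⊆ smallSubsets X k t) :
    #P ≤ #C * #(smallSubsets X k (t + s)) := by
  classical
  rw [← one_mul #(smallSubsets X k (t + s))]
  refine card_le_of_traces singleton hC.card_eq (fun c _ => (card_singleton c).le) fun p hp => ?_
  obtain ⟨hpX, hpk⟩ := mem_smallSubsets.1 (hP hp)
  obtain ⟨c, hc, hcp⟩ := hC.exists_subset p hp
  exact ⟨hpX, c, hc, mem_singleton.2 (inter_eq_right.2 hcp), by rwa [union_eq_left.2 hcp]⟩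

omit [DecidableEq α] in
theorem card_le_of_forall_mem (hP : P ⊆ smallSubsets X k t) (hx : ∀ p ∈ P, x ∈ p) :
    #P ≤ #(smallSubsets X k (t + 1)) := by
  classical
  have hC : IsUniformCover {{x}} 1 P :=
    ⟨by simp only [mem_singleton, forall_eq, card_singleton],
      fun p hp => ⟨{x}, mem_singleton_self _, singleton_subset_iff.2 (hx p hp)⟩⟩
  simpa only [card_singleton, one_mul] using hC.card_le hP

theorem IsUniformCover.card_infs_le (hC : IsUniformCover C s P) (hP : P ⊆ smallSubsets X k t) :
    #(P ⊼ Q) ≤ #C * (2 ^ s * #(smallSubsets X k (t + s))) := by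
  refine card_le_of_traces powerset hC.card_eq
    (fun c hc => by rw [card_powerset, hC.card_eq c hc]) fun D hD => ?_
  obtain ⟨p, hp, q, -, rfl⟩ := mem_infs_iff_exists_inter.1 hD
  obtain ⟨hpX, hpk⟩ := mem_smallSubsets.1 (hP hp)
  obtain ⟨c, hc, hcp⟩ := hC.exists_subset p hp
  have := card_le_card (union_subset inter_subset_left hcp : p ∩ q ∪ c ⊆ p)
  exact ⟨inter_subset_left.trans hpX, c, hc, mem_powerset.2 inter_subset_right, by lia⟩

theorem inter_eq_or_eq_erase (hDq : D ⊆ q) (hcard : #q ≤ #D + 1) (hcq : c ⊆ q) :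
    D ∩ c = c ∨ ∃ y ∈ c, D ∩ c = c.erase y := by
  refine or_iff_not_imp_left.2 fun h => ?_
  obtain ⟨y, hyc, hyD⟩ := not_subset.1 (mt inter_eq_right.2 h)
  have hD : D = q.erase y :=
    eq_of_subset_of_card_le (subset_erase.2 ⟨hDq, hyD⟩)
      (by rw [card_erase_of_mem (hcq hyc)]; lia)
  exact ⟨y, hyc, by rw [hD, erase_inter, inter_eq_right.2 hcq]⟩

omit [DecidableEq α] in
theorem IsUniformCover.card_le_of_near_subset (hC : IsUniformCover C s Q)
    (hQ : Q ⊆ smallSubsets X k t) (h𝒟 : ∀ D ∈ 𝒟, ∃ q ∈ Q, D ⊆ q ∧ #q ≤ #D + 1) :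
    #𝒟 ≤ #C * ((s + 1) * #(smallSubsets X k (t + s))) := by
  classical
  refine card_le_of_traces (fun c => insert c (c.image c.erase)) hC.card_eq (fun c hc => ?_)
    fun D hD => ?_
  · rw [← hC.card_eq c hc]
    exact (card_insert_le _ _).trans (Nat.add_le_add_right card_image_le 1)
  · obtain ⟨q, hq, hDq, hcard⟩ := h𝒟 D hD
    obtain ⟨hqX, hqk⟩ := mem_smallSubsets.1 (hQ hq)
    obtain ⟨c, hc, hcq⟩ := hC.exists_subset q hq
    have := card_le_card (union_subset hDq hcq)
    refine ⟨hDq.trans hqX, c, hc, ?_, by lia⟩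
    rw [mem_insert, mem_image]
    simpa only [eq_comm] using inter_eq_or_eq_erase hDq hcard hcq

/-! ### Transversals -/

/-- `T` is a transversal (a hitting set) of the family `Q`. -/
def IsTransversal (T : Finset α) (Q : Finset (Finset α)) : Prop := ∀ q ∈ Q, (T ∩ q).Nonempty

/-- Every member of `P` meets every member of `Q`: the relation `crossInt` over any type. -/
def CrossIntersecting (P Q : Finset (Finset α)) : Prop := ∀ p ∈ P, IsTransversal p Q

/-- The transversals of `Q` of size at most `s` have no common element. The least such `s` plays
the role of the transversal number: below it, one element is forced into every transversal. -/
def Unpinned (Q : Finset (Finset α)) (s : ℕ) : Prop :=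
  ∀ v, ∃ T, IsTransversal T Q ∧ #T ≤ s ∧ v ∉ T

theorem IsTransversal.mono (hT : IsTransversal T Q) (h : Q' ⊆ Q) : IsTransversal T Q' :=
  fun q hq => hT q (h hq)

theorem isTransversal_pair {a b : α} : IsTransversal {a, b} Q ↔ ∀ q ∈ Q, a ∈ q ∨ b ∈ q := by
  refine forall₂_congr fun q _ => ?_
  simp only [Finset.Nonempty, mem_inter, mem_insert, mem_singleton, or_and_right, exists_or,
    exists_eq_left]

theorem CrossIntersecting.symm (h : CrossIntersecting P Q) : CrossIntersecting Q P :=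
  fun q hq p hp => by rw [inter_comm]; exact h p hp q hq

theorem CrossIntersecting.mono (h : CrossIntersecting P Q) (hP : P' ⊆ P) (hQ : Q' ⊆ Q) :
    CrossIntersecting P' Q' :=
  fun p hp => (h p (hP hp)).mono hQ

theorem exists_minimal_isTransversal (h : ∃ T, IsTransversal T Q) :
    ∃ T, IsTransversal T Q ∧ ∀ T', IsTransversal T' Q → #T ≤ #T' := by
  obtain ⟨T, hT⟩ := exists_minimalFor_of_wellFoundedLT (IsTransversal · Q) card h
  exact ⟨T, hT.1, fun T' hT' => (le_total #T #T').elim id (hT.2 hT')⟩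

theorem IsTransversal.two_le_card [Nonempty α] (hT : IsTransversal T Q)
    (hQ : ∀ z, ∃ q ∈ Q, z ∉ q) : 2 ≤ #T := by
  by_contra! h
  obtain ⟨z, hz⟩ := card_le_one_iff_subset_singleton.1 (Nat.le_of_lt_succ h)
  obtain ⟨q, hq, hzq⟩ := hQ z
  obtain ⟨w, hw⟩ := hT q hq
  obtain ⟨hwT, hwq⟩ := mem_inter.1 hw
  exact hzq (mem_singleton.1 (hz hwT) ▸ hwq)

theorem CrossIntersecting.exists_unpinned (h : CrossIntersecting P Q)
    (hP : ∀ z, ∃ p ∈ P, z ∉ p) : ∃ s, Unpinned Q s :=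
  ⟨P.sup card, fun v => (hP v).imp fun p hp => ⟨h p hp.1, le_sup (f := card) hp.1, hp.2⟩⟩

theorem exists_unpinned_and_pin [Nonempty α] (h : ∃ s, Unpinned Q s) :
    ∃ s, Unpinned Q s ∧ ∃ x, ∀ T, IsTransversal T Q → #T < s → x ∈ T := by
  classical
  refine ⟨Nat.find h, Nat.find_spec h, ?_⟩
  rcases Nat.eq_zero_or_pos (Nat.find h) with h0 | h0
  · exact ⟨Classical.arbitrary α, fun T _ hT => by lia⟩
  · have hpin := Nat.find_min h (Nat.sub_lt h0 one_pos)
    simp only [Unpinned, not_forall, not_exists, not_and, not_not] at hpin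
    exact hpin.imp fun x hx T hT hcard => hx T hT (Nat.le_sub_one_of_lt hcard)

/-! ### Branching -/

theorem IsTransversal.isUniformCover (hT : IsTransversal T P) :
    IsUniformCover (T.powersetCard 1) 1 P := by
  refine ⟨fun c hc => (mem_powersetCard.1 hc).2, fun p hp => ?_⟩
  obtain ⟨v, hv⟩ := hT p hp
  obtain ⟨hvT, hvp⟩ := mem_inter.1 hv
  exact ⟨{v}, mem_powersetCard.2 ⟨singleton_subset_iff.2 hvT, card_singleton v⟩,
    singleton_subset_iff.2 hvp⟩

theorem Unpinned.exists_isUniformCover_two [Nonempty α] (h : Unpinned P s) :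
    ∃ C, #C ≤ s ^ 2 ∧ IsUniformCover C 2 P := by
  choose T hT hTs hvT using h
  let v₀ := Classical.arbitrary α
  refine ⟨(T v₀).biUnion fun v => (T v).image fun w => {v, w}, ?_, ⟨fun c hc => ?_, fun p hp => ?_⟩⟩
  · rw [sq]
    exact (card_biUnion_le_card_mul _ _ s fun v _ => card_image_le.trans (hTs v)).trans
      (Nat.mul_le_mul_right _ (hTs v₀))
  · obtain ⟨v, -, hc⟩ := mem_biUnion.1 hc
    obtain ⟨w, hw, rfl⟩ := mem_image.1 hc
    exact card_pair fun e => hvT v (e ▸ hw)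
  · obtain ⟨v, hv⟩ := hT v₀ p hp
    obtain ⟨w, hw⟩ := hT v p hp
    rw [mem_inter] at hv hw
    exact ⟨{v, w}, mem_biUnion.2 ⟨v, hv.1, mem_image_of_mem _ hw.1⟩,
      insert_subset hv.2 (singleton_subset_iff.2 hw.2)⟩

/-- A set of the cover that is not yet a transversal of `Q` misses some `q ∈ Q`, and each `p ∈ P`
extending it meets `q`: branch over the elements of `q`. -/
theorem IsUniformCover.exists_succ (hC : IsUniformCover C i P) (hQ : ∀ q ∈ Q, #q ≤ k)
    (hPQ : CrossIntersecting P Q) (hP : ∀ p ∈ P, ∀ T ⊆ p, IsTransversal T Q → i < #T) :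
    ∃ C', #C' ≤ #C * k ∧ IsUniformCover C' (i + 1) P := by
  let C₀ := {c ∈ C | ∃ p ∈ P, c ⊆ p}
  have hmiss : ∀ c ∈ C₀, ∃ q ∈ Q, c ∩ q = ∅ := by
    intro c hc
    obtain ⟨hcC, p, hp, hcp⟩ := mem_filter.1 hc
    by_contra! hc'
    exact (hP p hp c hcp hc').ne' (hC.card_eq c hcC)
  choose! f hfQ hf using hmiss
  refine ⟨C₀.biUnion fun c => (f c).image (insert · c), ?_, fun c' hc' => ?_, fun p hp => ?_⟩
  · refine (card_biUnion_le_card_mul _ _ k fun c hc =>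
      card_image_le.trans (hQ _ (hfQ c hc))).trans ?_
    exact Nat.mul_le_mul_right k (card_filter_le _ _)
  · obtain ⟨c, hc, hc'⟩ := mem_biUnion.1 hc'
    obtain ⟨v, hv, rfl⟩ := mem_image.1 hc'
    have hvc : v ∉ c := fun hvc => eq_empty_iff_forall_notMem.1 (hf c hc) v (mem_inter.2 ⟨hvc, hv⟩)
    rw [card_insert_of_notMem hvc, hC.card_eq c (mem_filter.1 hc).1]
  · obtain ⟨c, hcC, hcp⟩ := hC.exists_subset p hp
    have hc : c ∈ C₀ := mem_filter.2 ⟨hcC, p, hp, hcp⟩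
    obtain ⟨v, hv⟩ := hPQ p hp _ (hfQ c hc)
    obtain ⟨hvp, hvf⟩ := mem_inter.1 hv
    exact ⟨insert v c, mem_biUnion.2 ⟨c, hc, mem_image_of_mem _ hvf⟩, insert_subset hvp hcp⟩

theorem IsUniformCover.exists_add (hC : IsUniformCover C i P) (hQ : ∀ q ∈ Q, #q ≤ k)
    (hPQ : CrossIntersecting P Q)
    (hP : ∀ p ∈ P, ∀ T ⊆ p, IsTransversal T Q → i + j ≤ #T) :
    ∃ C', #C' ≤ #C * k ^ j ∧ IsUniformCover C' (i + j) P := by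
  induction j with
  | zero => exact ⟨C, by rw [pow_zero, mul_one], hC⟩
  | succ j ih =>
    obtain ⟨C₁, hcard₁, hC₁⟩ := ih fun p hp T hTp hT => Nat.le_of_succ_le (hP p hp T hTp hT)
    obtain ⟨C₂, hcard₂, hC₂⟩ := hC₁.exists_succ hQ hPQ hP
    refine ⟨C₂, hcard₂.trans ?_, hC₂⟩
    rw [pow_succ, ← mul_assoc]
    exact Nat.mul_le_mul_right k hcard₁

theorem IsTransversal.exists_isUniformCover (hT : IsTransversal T P) (hQ : ∀ q ∈ Q, #q ≤ k)
    (hPQ : CrossIntersecting P Q)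
    (hP : ∀ p ∈ P, ∀ T ⊆ p, IsTransversal T Q → i + 1 ≤ #T) :
    ∃ C, #C ≤ #T * k ^ i ∧ IsUniformCover C (i + 1) P := by
  have := hT.isUniformCover.exists_add (j := i) hQ hPQ (by simpa only [add_comm 1 i] using hP)
  rwa [card_powersetCard, Nat.choose_one_right, add_comm 1 i] at this

theorem Unpinned.exists_isUniformCover [Nonempty α] (hs : Unpinned P s) (hQ : ∀ q ∈ Q, #q ≤ k)
    (hPQ : CrossIntersecting P Q)
    (hP : ∀ p ∈ P, ∀ T ⊆ p, IsTransversal T Q → i + 2 ≤ #T) :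
    ∃ C, #C ≤ s ^ 2 * k ^ i ∧ IsUniformCover C (i + 2) P := by
  obtain ⟨C, hcard, hC⟩ := hs.exists_isUniformCover_two
  obtain ⟨C', hcard', hC'⟩ :=
    hC.exists_add (j := i) hQ hPQ (by simpa only [add_comm 2 i] using hP)
  exact ⟨C', hcard'.trans (Nat.mul_le_mul_right _ hcard), by rwa [add_comm i 2]⟩

/-! ### Cross-intersecting families with few intersections -/

theorem succ_mul_two_pow_le (hi : 1 ≤ i) : 10 * ((i + 1) * 2 ^ (i + 1)) ≤ 100 ^ i := by
  induction i, hi using Nat.le_induction with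
  | base => norm_num
  | succ i _ ih =>
    calc 10 * ((i + 1 + 1) * 2 ^ (i + 1 + 1))
        ≤ 10 * (2 * (i + 1) * 2 ^ (i + 1 + 1)) := by gcongr; lia
      _ = 4 * (10 * ((i + 1) * 2 ^ (i + 1))) := by ring
      _ ≤ 4 * 100 ^ i := by gcongr
      _ ≤ 100 ^ (i + 1) := by rw [pow_succ]; lia

theorem sq_mul_two_pow_le (hi : 1 ≤ i) :
    100 * ((i + 2) ^ 2 * 2 ^ (i + 2)) ≤ 72 * 100 ^ i := by
  induction i, hi using Nat.le_induction with
  | base => norm_num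
  | succ i _ ih =>
    calc 100 * ((i + 1 + 2) ^ 2 * 2 ^ (i + 1 + 2))
        ≤ 100 * ((2 * (i + 2)) ^ 2 * 2 ^ (i + 1 + 2)) := by gcongr; lia
      _ = 8 * (100 * ((i + 2) ^ 2 * 2 ^ (i + 2))) := by ring
      _ ≤ 8 * (72 * 100 ^ i) := by gcongr
      _ ≤ 72 * 100 ^ (i + 1) := by rw [pow_succ]; lia

theorem succ_sq_mul_add_three_le (hi : 1 ≤ i) :
    100 * ((i + 1) ^ 2 * (i + 3)) ≤ 16 * 100 ^ i := by
  induction i, hi using Nat.le_induction with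
  | base => norm_num
  | succ i _ ih =>
    calc 100 * ((i + 1 + 1) ^ 2 * (i + 1 + 3))
        ≤ 100 * ((2 * (i + 1)) ^ 2 * (2 * (i + 3))) := by gcongr <;> lia
      _ = 8 * (100 * ((i + 1) ^ 2 * (i + 3))) := by ring
      _ ≤ 8 * (16 * 100 ^ i) := by gcongr
      _ ≤ 16 * 100 ^ (i + 1) := by rw [pow_succ]; lia

theorem ten_mul_card_infs_le_of_forall_mem (hX : 100 * k ^ 2 ≤ #X) (hP : P ⊆ smallSubsets X k s)
    (hx : ∀ p ∈ P, x ∈ p) (hT : IsTransversal T P) (hTk : #T ≤ k) (hxT : x ∉ T) :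
    10 * #(P ⊼ Q) ≤ #(smallSubsets X k (s + 1)) := by
  have hC : IsUniformCover (T.image fun v => {x, v}) 2 P := by
    refine ⟨fun c hc => ?_, fun p hp => ?_⟩
    · obtain ⟨v, hv, rfl⟩ := mem_image.1 hc
      exact card_pair fun e => hxT (e ▸ hv)
    · obtain ⟨v, hv⟩ := hT p hp
      obtain ⟨hvT, hvp⟩ := mem_inter.1 hv
      exact ⟨{x, v}, mem_image_of_mem _ hvT,
        insert_subset (hx p hp) (singleton_subset_iff.2 hvp)⟩
  have hcard : #(P ⊼ Q) ≤ 4 * k ^ 1 * #(smallSubsets X k (s + 1 + 1)) :=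
    calc #(P ⊼ Q)
        ≤ #(T.image fun v => ({x, v} : Finset α)) * (2 ^ 2 * #(smallSubsets X k (s + 2))) :=
          hC.card_infs_le hP
      _ ≤ k * (2 ^ 2 * #(smallSubsets X k (s + 2))) := by
          gcongr; exact card_image_le.trans hTk
      _ = _ := by ring
  simpa only [one_mul] using
    mul_le_mul_card_smallSubsets (R := 10) (b := 1) hX (Nat.le_add_left 1 s) hcard (by norm_num)

theorem ten_mul_card_infs_le_of_le_card_transversal (hX : 100 * k ^ 2 ≤ #X)
    (hP : P ⊆ smallSubsets X k s) (hQ : ∀ q ∈ Q, #q ≤ k) (hPQ : CrossIntersecting P Q)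
    (hi : 1 ≤ i) (hT : IsTransversal T P) (hTi : #T ≤ i + 1)
    (hle : ∀ T', IsTransversal T' Q → i + 1 ≤ #T') :
    10 * #(P ⊼ Q) ≤ #(smallSubsets X k (s + 1)) := by
  obtain ⟨C, hcard, hC⟩ := hT.exists_isUniformCover hQ hPQ fun _ _ T' _ => hle T'
  have hcard : #(P ⊼ Q) ≤ (i + 1) * 2 ^ (i + 1) * k ^ i * #(smallSubsets X k (s + 1 + i)) :=
    calc #(P ⊼ Q) ≤ #C * (2 ^ (i + 1) * #(smallSubsets X k (s + (i + 1)))) := hC.card_infs_le hP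
      _ ≤ (i + 1) * k ^ i * (2 ^ (i + 1) * #(smallSubsets X k (s + (i + 1)))) := by
          gcongr; exact hcard.trans (Nat.mul_le_mul_right _ hTi)
      _ = _ := by rw [add_comm i 1, ← add_assoc s 1 i]; ring
  simpa only [one_mul] using mul_le_mul_card_smallSubsets (R := 10) (b := 1) hX
    (Nat.le_add_left 1 s) hcard (by simpa only [one_mul] using succ_mul_two_pow_le hi)

theorem exists_common_or_ten_mul_card_infs_le_of_forall_mem (hX : 100 * k ^ 2 ≤ #X)
    (hP : P ⊆ smallSubsets X k s) (hQ : ∀ q ∈ Q, #q ≤ k) (hPQ : CrossIntersecting P Q)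
    (hx : ∀ p ∈ P, x ∈ p) :
    (∃ w, ∀ D ∈ P ⊼ Q, w ∈ D) ∨ 10 * #(P ⊼ Q) ≤ #(smallSubsets X k (s + 1)) := by
  by_cases h : ∀ q ∈ Q, x ∈ q
  · exact .inl ⟨x, forall_infs_iff.2 fun p hp q hq => mem_inter.2 ⟨hx p hp, h q hq⟩⟩
  · push Not at h
    obtain ⟨q, hq, hxq⟩ := h
    exact .inr (ten_mul_card_infs_le_of_forall_mem hX hP hx (hPQ.symm q hq) (hQ q hq) hxq)

theorem exists_common_or_ten_mul_card_infs_le [Nonempty α] (hX : 100 * k ^ 2 ≤ #X)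
    (hP : P ⊆ smallSubsets X k s) (hQ : Q ⊆ smallSubsets X k s) (hPQ : CrossIntersecting P Q) :
    (∃ w, ∀ D ∈ P ⊼ Q, w ∈ D) ∨ 10 * #(P ⊼ Q) ≤ #(smallSubsets X k (s + 1)) := by
  have hPk := card_le_of_subset_smallSubsets hP
  have hQk := card_le_of_subset_smallSubsets hQ
  by_cases hxP : ∃ x, ∀ p ∈ P, x ∈ p
  · exact exists_common_or_ten_mul_card_infs_le_of_forall_mem hX hP hQk hPQ hxP.choose_spec
  by_cases hxQ : ∃ x, ∀ q ∈ Q, x ∈ q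
  · rw [infs_comm]
    exact exists_common_or_ten_mul_card_infs_le_of_forall_mem hX hQ hPk hPQ.symm hxQ.choose_spec
  push Not at hxP hxQ
  obtain ⟨p, hp, -⟩ := hxP (Classical.arbitrary α)
  obtain ⟨q, hq, -⟩ := hxQ (Classical.arbitrary α)
  obtain ⟨T, hT, hTmin⟩ := exists_minimal_isTransversal ⟨q, hPQ.symm q hq⟩
  obtain ⟨S, hS, hSmin⟩ := exists_minimal_isTransversal ⟨p, hPQ p hp⟩
  obtain ⟨i, hi⟩ := Nat.exists_eq_add_of_le' (hT.two_le_card hxP)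
  obtain ⟨j, hj⟩ := Nat.exists_eq_add_of_le' (hS.two_le_card hxQ)
  right
  rcases le_total #T #S with h | h
  · exact ten_mul_card_infs_le_of_le_card_transversal (i := j + 1) hX hP hQk hPQ (by lia) hT
      (by lia) fun T' hT' => hj ▸ hSmin T' hT'
  · rw [infs_comm]
    exact ten_mul_card_infs_le_of_le_card_transversal (i := i + 1) hX hQ hPk hPQ.symm (by lia) hS
      (by lia) fun T' hT' => hi ▸ hTmin T' hT'

theorem memberSubfamily_subset_smallSubsets (hP : P ⊆ smallSubsets X k s) :
    P.memberSubfamily x ⊆ smallSubsets X k (s + 1) := fun D hD => by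
  obtain ⟨hD, hxD⟩ := mem_memberSubfamily.1 hD
  obtain ⟨hDX, hDk⟩ := mem_smallSubsets.1 (hP hD)
  rw [card_insert_of_notMem hxD] at hDk
  exact mem_smallSubsets.2 ⟨(subset_insert x D).trans hDX, by lia⟩

theorem nonMemberSubfamily_subset : P.nonMemberSubfamily x ⊆ P :=
  filter_subset _ _

theorem CrossIntersecting.memberSubfamily (h : CrossIntersecting P Q) :
    CrossIntersecting (P.memberSubfamily x) (Q.nonMemberSubfamily x) := fun p hp q hq => by
  obtain ⟨hq, hxq⟩ := mem_nonMemberSubfamily.1 hq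
  rw [← insert_inter_of_notMem hxq]
  exact h _ (mem_memberSubfamily.1 hp).1 q hq

theorem card_infs_le_add (h𝒟 : 𝒟 ⊆ U ⊼ V) (x : α) :
    #𝒟 ≤ #{D ∈ 𝒟 | x ∈ D} + #(U.nonMemberSubfamily x ⊼ V) +
      #(U.memberSubfamily x ⊼ V.nonMemberSubfamily x) := by
  refine le_trans (card_le_card ?_)
    ((card_union_le _ _).trans (Nat.add_le_add_right (card_union_le _ _) _))
  intro D hD
  obtain ⟨u, hu, v, hv, rfl⟩ := mem_infs_iff_exists_inter.1 (h𝒟 hD)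
  rw [mem_union, mem_union, mem_filter]
  by_cases hxu : x ∈ u
  · by_cases hxv : x ∈ v
    · exact .inl (.inl ⟨hD, mem_inter.2 ⟨hxu, hxv⟩⟩)
    · refine .inr (mem_infs_iff_exists_inter.2 ⟨u.erase x, ?_, v, ?_, ?_⟩)
      · exact mem_memberSubfamily.2 ⟨by rwa [insert_erase hxu], notMem_erase x u⟩
      · exact mem_nonMemberSubfamily.2 ⟨hv, hxv⟩
      · rw [erase_inter, erase_eq_of_notMem fun h => hxv (mem_inter.1 h).2]
  · exact .inl (.inr (inter_mem_infs (mem_nonMemberSubfamily.2 ⟨hu, hxu⟩) hv))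

theorem card_infs_le_add_of_forall_mem (hx : ∀ u ∈ U, x ∈ u) :
    #(U ⊼ V) ≤ #{D ∈ U ⊼ V | x ∈ D} + #(U.memberSubfamily x ⊼ V.nonMemberSubfamily x) := by
  have hU : U.nonMemberSubfamily x = ∅ := filter_eq_empty_iff.2 fun u hu => not_not.2 (hx u hu)
  simpa only [hU, empty_infs, card_empty, add_zero] using
    card_infs_le_add (Subset.refl (U ⊼ V)) x

theorem card_filter_mem_le (h𝒟 : 𝒟 ⊆ smallSubsets X k s) (x : α) :
    #{D ∈ 𝒟 | x ∈ D} ≤ #(smallSubsets X k (s + 1)) :=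
  card_le_of_forall_mem ((filter_subset _ _).trans h𝒟) fun _ hD => (mem_filter.1 hD).2

theorem card_infs_le_two_mul_of_forall_mem_left (hP : P ⊆ smallSubsets X k s)
    (hx : ∀ p ∈ P, x ∈ p) :
    #(P ⊼ Q) ≤ 2 * #(smallSubsets X k (s + 1)) := by
  rw [two_mul]
  exact (card_infs_le_add_of_forall_mem hx).trans
    (Nat.add_le_add (card_filter_mem_le (infs_subset_smallSubsets hP) x)
      (card_le_card (infs_subset_smallSubsets (memberSubfamily_subset_smallSubsets hP))))

theorem card_infs_le_two_mul_of_forall_mem_right [Nonempty α] (hX : 100 * k ^ 2 ≤ #X)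
    (hP : P ⊆ smallSubsets X k (s + 1)) (hQ : Q ⊆ smallSubsets X k s)
    (hPQ : CrossIntersecting P Q) (hx : ∀ q ∈ Q, x ∈ q) :
    #(P ⊼ Q) ≤ 2 * #(smallSubsets X k (s + 2)) := by
  have hPQs : Q ⊼ P ⊆ smallSubsets X k (s + 1) :=
    infs_comm P Q ▸ infs_subset_smallSubsets hP
  have hQs := memberSubfamily_subset_smallSubsets (x := x) hQ
  have hPs := (nonMemberSubfamily_subset (x := x)).trans hP
  have hmeet := infs_subset_smallSubsets (Q := P.nonMemberSubfamily x) hQs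
  rw [infs_comm, two_mul]
  refine (card_infs_le_add_of_forall_mem hx).trans
    (Nat.add_le_add (card_filter_mem_le hPQs x) ?_)
  rcases exists_common_or_ten_mul_card_infs_le hX hQs hPs hPQ.symm.memberSubfamily
    with ⟨w, hw⟩ | h
  · exact card_le_of_forall_mem hmeet hw
  · exact le_trans (Nat.le_mul_of_pos_left _ (by norm_num)) h

theorem hundred_mul_card_le_of_isTransversal (hX : 100 * k ^ 2 ≤ #X)
    (h𝒟 : 𝒟 ⊆ smallSubsets X k 1) (hQ : ∀ q ∈ Q, #q ≤ k) (h𝒟Q : CrossIntersecting 𝒟 Q)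
    (hi : 1 ≤ i) (hT : IsTransversal T 𝒟) (hTi : #T ≤ i + 1)
    (hle : ∀ D ∈ 𝒟, ∀ T' ⊆ D, IsTransversal T' Q → i + 1 ≤ #T') :
    100 * #𝒟 ≤ 16 * #(smallSubsets X k 2) := by
  obtain ⟨C, hcard, hC⟩ := hT.exists_isUniformCover hQ h𝒟Q hle
  have hcard : #𝒟 ≤ (i + 1) * k ^ i * #(smallSubsets X k (2 + i)) :=
    calc #𝒟 ≤ #C * #(smallSubsets X k (1 + (i + 1))) := hC.card_le h𝒟
      _ ≤ (i + 1) * k ^ i * #(smallSubsets X k (1 + (i + 1))) := by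
          gcongr; exact hcard.trans (Nat.mul_le_mul_right _ hTi)
      _ = _ := by rw [show 1 + (i + 1) = 2 + i by ring]
  refine mul_le_mul_card_smallSubsets hX (by norm_num) hcard
    (le_trans ?_ (succ_sq_mul_add_three_le hi))
  gcongr
  nlinarith

theorem hundred_mul_card_le_of_unpinned [Nonempty α] (hX : 100 * k ^ 2 ≤ #X)
    (hP : ∀ p ∈ P, #p ≤ k) (hQ : Q ⊆ smallSubsets X k 0) (hQP : CrossIntersecting Q P)
    (h𝒟 : ∀ D ∈ 𝒟, ∃ q ∈ Q, D ⊆ q ∧ #q ≤ #D + 1) (hi : 1 ≤ i) (hs : Unpinned Q s)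
    (hsi : s ≤ i + 1) (hle : ∀ T, IsTransversal T P → i + 2 ≤ #T) :
    100 * #𝒟 ≤ 16 * #(smallSubsets X k 2) := by
  obtain ⟨C, hcard, hC⟩ := hs.exists_isUniformCover hP hQP fun _ _ T _ => hle T
  have hcard : #𝒟 ≤ (i + 1) ^ 2 * (i + 3) * k ^ i * #(smallSubsets X k (2 + i)) :=
    calc #𝒟 ≤ #C * ((i + 2 + 1) * #(smallSubsets X k (0 + (i + 2)))) :=
          hC.card_le_of_near_subset hQ h𝒟
      _ ≤ (i + 1) ^ 2 * k ^ i * ((i + 2 + 1) * #(smallSubsets X k (0 + (i + 2)))) := by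
          gcongr; exact hcard.trans (by gcongr)
      _ = _ := by rw [show 0 + (i + 2) = 2 + i by ring]; ring
  exact mul_le_mul_card_smallSubsets hX (by norm_num) hcard (succ_sq_mul_add_three_le hi)

/-- An intersection of the largest possible size is a member of `P` and omits at most one element
of some member of `Q`. -/
theorem hundred_mul_card_large_infs_le [Nonempty α] (hX : 100 * k ^ 2 ≤ #X)
    (hP : P ⊆ smallSubsets X k 1) (hQ : Q ⊆ smallSubsets X k 0) (hPQ : CrossIntersecting P Q)
    (hxP : ∀ x, ∃ p ∈ P, x ∉ p) (hxQ : ∀ x, ∃ q ∈ Q, x ∉ q) :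
    100 * #{D ∈ P ⊼ Q | ¬ #D + 2 ≤ k} ≤ 116 * #(smallSubsets X k 2) := by
  have hPk := card_le_of_subset_smallSubsets hP
  have hQk := card_le_of_subset_smallSubsets hQ
  obtain ⟨s, hs, z, hz⟩ := exists_unpinned_and_pin (hPQ.exists_unpinned hxP)
  obtain ⟨q₀, hq₀, -⟩ := hxQ z
  obtain ⟨T, hT, hTmin⟩ := exists_minimal_isTransversal ⟨q₀, hPQ.symm q₀ hq₀⟩
  obtain ⟨t, ht⟩ := Nat.exists_eq_add_of_le' (hT.two_le_card hxP)
  obtain ⟨S, hS, hSs, -⟩ := hs z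
  obtain ⟨i, rfl⟩ := Nat.exists_eq_add_of_le' ((hS.two_le_card hxQ).trans hSs)
  set 𝒟 := {D ∈ P ⊼ Q | ¬ #D + 2 ≤ k}
  have hlarge : ∀ D ∈ 𝒟, D ∈ P ∧ ∃ q ∈ Q, D ⊆ q ∧ #q ≤ #D + 1 := by
    intro D hD
    obtain ⟨hD, hk⟩ := mem_filter.1 hD
    obtain ⟨p, hp, q, hq, rfl⟩ := mem_infs_iff_exists_inter.1 hD
    have hpk := (mem_smallSubsets.1 (hP hp)).2
    have hpq : p ∩ q = p := eq_of_subset_of_card_le inter_subset_left (by lia)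
    exact ⟨by rwa [hpq], q, hq, inter_subset_right, (hQk q hq).trans (by lia)⟩
  have h𝒟P : 𝒟 ⊆ P := fun D hD => (hlarge D hD).1
  have havoid : 100 * #{D ∈ 𝒟 | z ∉ D} ≤ 16 * #(smallSubsets X k 2) := by
    have hsub := filter_subset (fun D => z ∉ D) 𝒟
    rcases le_or_gt #T (i + 2) with hle | hlt
    · refine hundred_mul_card_le_of_isTransversal (i := i + 1) hX (hsub.trans (h𝒟P.trans hP)) hQk
        (hPQ.mono (hsub.trans h𝒟P) Subset.rfl) (by lia) (hT.mono (hsub.trans h𝒟P)) hle ?_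
      intro D hD T' hT'D hT'
      by_contra! hcard
      exact (mem_filter.1 hD).2 (hT'D (hz T' hT' hcard))
    · exact hundred_mul_card_le_of_unpinned hX hPk hQ hPQ.symm
        (fun D hD => (hlarge D (hsub hD)).2) (by lia) hs (i := t) (by lia)
        fun T' hT' => ht ▸ hTmin T' hT'
  have hmem := card_filter_mem_le (h𝒟P.trans hP) z
  have := card_filter_add_card_filter_not (s := 𝒟) (fun D => z ∈ D)
  lia

theorem hundred_mul_card_infs_le [Nonempty α] (hX : 100 * k ^ 2 ≤ #X)
    (hP : P ⊆ smallSubsets X k 1) (hQ : Q ⊆ smallSubsets X k 0) (hPQ : CrossIntersecting P Q) :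
    100 * #(P ⊼ Q) ≤ 216 * #(smallSubsets X k 2) := by
  by_cases hxP : ∃ x, ∀ p ∈ P, x ∈ p
  · have := card_infs_le_two_mul_of_forall_mem_left (Q := Q) hP hxP.choose_spec
    lia
  by_cases hxQ : ∃ x, ∀ q ∈ Q, x ∈ q
  · have := card_infs_le_two_mul_of_forall_mem_right hX hP hQ hPQ hxQ.choose_spec
    lia
  push Not at hxP hxQ
  have hlarge := hundred_mul_card_large_infs_le hX hP hQ hPQ hxP hxQ
  have hsmall : #{D ∈ P ⊼ Q | #D + 2 ≤ k} ≤ #(smallSubsets X k 2) :=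
    card_le_card fun D hD => by
      obtain ⟨hD, hDk⟩ := mem_filter.1 hD
      exact mem_smallSubsets.2 ⟨(mem_smallSubsets.1 (infs_subset_smallSubsets hP hD)).1, hDk⟩
  have := card_filter_add_card_filter_not (s := P ⊼ Q) (fun D => #D + 2 ≤ k)
  lia

/-! ### Families with large or pinned transversals -/

theorem hundred_mul_card_le_add [Nonempty α] (hX : 100 * k ^ 2 ≤ #X) (h𝒟 : 𝒟 ⊆ U ⊼ V)
    (h𝒟X : 𝒟 ⊆ smallSubsets X k 1) (hU : U ⊆ smallSubsets X k 0) (hV : V ⊆ smallSubsets X k 0)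
    (hUV : CrossIntersecting U V) (x : α) :
    100 * #𝒟 ≤ 316 * #(smallSubsets X k 2) + 100 * #(U.nonMemberSubfamily x ⊼ V) := by
  have hmem := card_filter_mem_le h𝒟X x
  have hmeet := hundred_mul_card_infs_le hX (memberSubfamily_subset_smallSubsets (x := x) hU)
    ((nonMemberSubfamily_subset (x := x)).trans hV) hUV.memberSubfamily
  have := card_infs_le_add h𝒟 x
  lia

theorem hundred_mul_card_le_of_forall_mem [Nonempty α] (hX : 100 * k ^ 2 ≤ #X) (h𝒟 : 𝒟 ⊆ U ⊼ V)
    (h𝒟X : 𝒟 ⊆ smallSubsets X k 1) (hU : U ⊆ smallSubsets X k 0) (hV : V ⊆ smallSubsets X k 0)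
    (hUV : CrossIntersecting U V) (hx : ∀ u ∈ U, x ∈ u) :
    100 * #𝒟 ≤ 390 * #(smallSubsets X k 2) := by
  have hUx : U.nonMemberSubfamily x = ∅ := filter_eq_empty_iff.2 fun u hu => not_not.2 (hx u hu)
  have := hundred_mul_card_le_add hX h𝒟 h𝒟X hU hV hUV x
  rw [hUx, empty_infs, card_empty] at this
  lia

theorem hundred_mul_card_le_of_pin [Nonempty α] (hX : 100 * k ^ 2 ≤ #X) (h𝒟 : 𝒟 ⊆ U ⊼ V)
    (h𝒟X : 𝒟 ⊆ smallSubsets X k 1) (hU : U ⊆ smallSubsets X k 0) (hV : V ⊆ smallSubsets X k 0)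
    (hUV : CrossIntersecting U V) (ht : Unpinned U t) (hts : t ≤ s) (hs : 3 ≤ s)
    (hx : ∀ T, IsTransversal T V → #T < s → x ∈ T) :
    100 * #𝒟 ≤ 390 * #(smallSubsets X k 2) := by
  obtain ⟨i, rfl⟩ := Nat.exists_eq_add_of_le' (show 2 ≤ s by lia)
  set U₀ := U.nonMemberSubfamily x
  have hU₀ : U₀ ⊆ U := nonMemberSubfamily_subset
  have ht₀ : Unpinned U₀ t := fun v => (ht v).imp fun T hT => ⟨hT.1.mono hU₀, hT.2⟩
  obtain ⟨C, hcard, hC⟩ := ht₀.exists_isUniformCover (i := i) (card_le_of_subset_smallSubsets hV)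
    (hUV.mono hU₀ Subset.rfl) fun u hu T hTu hT => by
      by_contra! hcard
      exact (mem_nonMemberSubfamily.1 hu).2 (hTu (hx T hT hcard))
  have hmeet : #(U₀ ⊼ V) ≤ (i + 2) ^ 2 * 2 ^ (i + 2) * k ^ i * #(smallSubsets X k (2 + i)) :=
    calc #(U₀ ⊼ V) ≤ #C * (2 ^ (i + 2) * #(smallSubsets X k (0 + (i + 2)))) :=
          hC.card_infs_le (hU₀.trans hU)
      _ ≤ (i + 2) ^ 2 * k ^ i * (2 ^ (i + 2) * #(smallSubsets X k (0 + (i + 2)))) := by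
          gcongr; exact hcard.trans (by gcongr)
      _ = _ := by rw [show 0 + (i + 2) = 2 + i by ring]; ring
  have hfew := mul_le_mul_card_smallSubsets hX (by norm_num) hmeet
    (sq_mul_two_pow_le (show 1 ≤ i by lia))
  have := hundred_mul_card_le_add hX h𝒟 h𝒟X hU hV hUV x
  lia

/-! ### Subsets of bounded size that hit a given set -/

/-- The members of `smallSubsets X k s` that meet `S`. -/
def hittingSubsets (X : Finset α) (k s : ℕ) (S : Finset α) : Finset (Finset α) :=
  {D ∈ smallSubsets X k s | (S ∩ D).Nonempty}

theorem mem_hittingSubsets :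
    D ∈ hittingSubsets X k s S ↔ D ∈ smallSubsets X k s ∧ (S ∩ D).Nonempty :=
  mem_filter

theorem card_hittingSubsets_add (X : Finset α) (k s : ℕ) (S : Finset α) :
    #(hittingSubsets X k s S) + #(smallSubsets (X \ S) k s) = #(smallSubsets X k s) := by
  rw [← card_filter_add_card_filter_not (s := smallSubsets X k s) fun D => (S ∩ D).Nonempty]
  congr 2
  ext D
  rw [mem_filter, mem_smallSubsets, mem_smallSubsets, subset_sdiff, not_nonempty_iff_eq_empty,
    inter_comm, ← disjoint_iff_inter_eq_empty]
  tauto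

theorem card_hittingSubsets_congr {X' S' : Finset α} (k s : ℕ) (hS : S ⊆ X) (hS' : S' ⊆ X')
    (hX : #X = #X') (h : #S = #S') :
    #(hittingSubsets X k s S) = #(hittingSubsets X' k s S') := by
  have h₁ := card_hittingSubsets_add X k s S
  have h₂ := card_hittingSubsets_add X' k s S'
  rw [card_smallSubsets, card_smallSubsets, card_sdiff_of_subset hS] at h₁
  rw [card_smallSubsets, card_smallSubsets, card_sdiff_of_subset hS', ← hX, ← h] at h₂
  lia

theorem card_hittingSubsets_le (X : Finset α) (k s : ℕ) (S : Finset α) :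
    #(hittingSubsets X k s S) ≤ #S * #(smallSubsets X k (s + 1)) := by
  have hsub : hittingSubsets X k s S ⊆ S.biUnion fun x => {D ∈ smallSubsets X k s | x ∈ D} := by
    intro D hD
    obtain ⟨hD, x, hx⟩ := mem_hittingSubsets.1 hD
    obtain ⟨hxS, hxD⟩ := mem_inter.1 hx
    exact mem_biUnion.2 ⟨x, hxS, mem_filter.2 ⟨hD, hxD⟩⟩
  exact (card_le_card hsub).trans
    (card_biUnion_le_card_mul _ _ _ fun x _ => card_filter_mem_le Subset.rfl x)

theorem card_smallSubsets_le_add (X S : Finset α) (k s : ℕ) :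
    #(smallSubsets X k s) ≤ #(smallSubsets (X \ S) k s) + #S * #(smallSubsets X k (s + 1)) := by
  have := card_hittingSubsets_add X k s S
  have := card_hittingSubsets_le X k s S
  lia

/-- The sets `insert x D` with `x ∈ S` and `D` disjoint from `S` are distinct. -/
theorem card_mul_card_smallSubsets_sdiff_le (k s : ℕ) (hS : S ⊆ X) :
    #S * #(smallSubsets (X \ S) k (s + 1)) ≤ #(hittingSubsets X k s S) := by
  have htrace {x : α} {D : Finset α} (hx : x ∈ S) (hD : D ∈ smallSubsets (X \ S) k (s + 1)) :
      S ∩ insert x D = {x} ∧ insert x D \ S = D := by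
    have hDS := (subset_sdiff.1 (mem_smallSubsets.1 hD).1).2
    rw [inter_insert_of_mem hx, disjoint_iff_inter_eq_empty.1 hDS.symm, insert_empty_eq,
      insert_sdiff_of_mem _ hx, hDS.sdiff_eq_left]
    exact ⟨rfl, rfl⟩
  rw [← card_product]
  refine card_le_card_of_injOn (fun y => insert y.1 y.2) (fun y hy => ?_) fun y hy z hz hyz => ?_
  · obtain ⟨hx, hD⟩ := mem_product.1 hy
    obtain ⟨hDX, hDk⟩ := mem_smallSubsets.1 hD
    have := card_insert_le y.1 y.2
    exact mem_hittingSubsets.2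
      ⟨mem_smallSubsets.2 ⟨insert_subset (hS hx) (hDX.trans sdiff_subset), by lia⟩,
        y.1, mem_inter.2 ⟨hx, mem_insert_self _ _⟩⟩
  · obtain ⟨hy₁, hy₂⟩ := htrace (mem_product.1 hy).1 (mem_product.1 hy).2
    obtain ⟨hz₁, hz₂⟩ := htrace (mem_product.1 hz).1 (mem_product.1 hz).2
    dsimp only at hyz
    rw [hyz] at hy₁ hy₂
    exact Prod.ext (singleton_injective (hy₁.symm.trans hz₁)) (hy₂.symm.trans hz₂)

theorem card_le_card_hittingSubsets {W : Finset α} (h𝒟 : 𝒟 ⊆ smallSubsets X k s)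
    (hW : IsTransversal W 𝒟) (hWS : #W ≤ #S) (hS : S ⊆ X) :
    #𝒟 ≤ #(hittingSubsets X k s S) := by
  obtain ⟨S', hWS', hS'X, hS'⟩ := exists_subsuperset_card_eq (inter_subset_right : W ∩ X ⊆ X)
    ((card_le_card inter_subset_left).trans hWS) (card_le_card hS)
  rw [card_hittingSubsets_congr k s hS hS'X rfl hS'.symm]
  refine card_le_card fun D hD => mem_hittingSubsets.2 ⟨h𝒟 hD, ?_⟩
  obtain ⟨w, hw⟩ := hW D hD
  obtain ⟨hwW, hwD⟩ := mem_inter.1 hw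
  have hwX := (mem_smallSubsets.1 (h𝒟 hD)).1 hwD
  exact ⟨w, mem_inter.2 ⟨hWS' (mem_inter.2 ⟨hwW, hwX⟩), hwD⟩⟩

theorem card_smallSubsets_le_card_hittingSubsets_of_card_eq_four (hk : 2 ≤ k)
    (hX : 100 * k ^ 2 ≤ #X) (hS : S ⊆ X) (hS4 : #S = 4) :
    390 * #(smallSubsets X k 2) ≤ 100 * #(hittingSubsets X k 1 S) := by
  have hratio := card_smallSubsets_succ_mul_le hX (show 1 ≤ 2 by norm_num)
  have hthree : #(smallSubsets X k 3) * 200 ≤ #(smallSubsets X k 3) * (100 * k) := by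
    gcongr; lia
  have hlow := card_mul_card_smallSubsets_sdiff_le k 1 hS
  have hhit := card_smallSubsets_le_add X S k 2
  rw [hS4] at hlow hhit
  lia

/-- The count for `Y` is compared with a count for `X` since only `X` is known to be large. -/
theorem card_smallSubsets_le_card_hittingSubsets_of_card_eq_two
    (hX : 100 * k ^ 2 ≤ #X) (hY : Y ⊆ X) (hXY : #(X \ Y) ≤ 4) (hS : S ⊆ Y) (hS2 : #S = 2) :
    11 * #(smallSubsets X k (s + 1)) ≤ 10 * #(hittingSubsets Y k s S) := by
  have hremoved : X \ (X \ Y ∪ S) = Y \ S := by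
    rw [← sup_eq_union, ← sdiff_sdiff_left, Finset.sdiff_sdiff_eq_self hY]
  have hlow := card_mul_card_smallSubsets_sdiff_le k s hS
  have hhit := card_smallSubsets_le_add X (X \ Y ∪ S) k (s + 1)
  have hsix : #(X \ Y ∪ S) ≤ 6 := (card_union_le _ _).trans (by lia)
  have hratio := card_smallSubsets_succ_mul_le (s := s + 1) hX (by lia)
  rw [hremoved] at hhit
  rw [hS2] at hlow
  have h6 := Nat.mul_le_mul_right #(smallSubsets X k (s + 1 + 1)) hsix
  rcases Nat.eq_zero_or_pos k with rfl | hk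
  · simp only [card_smallSubsets, zero_add, Nat.sub_eq_zero_of_le (show 1 ≤ s + 1 by lia),
      range_zero, sum_empty, mul_zero, zero_le]
  · have h100 := Nat.mul_le_mul_left #(smallSubsets X k (s + 1 + 1)) (show 100 ≤ 100 * k by lia)
    lia

theorem card_infs_union_infs_le [Nonempty α] (hX : 100 * k ^ 2 ≤ #X) (hY : Y ⊆ X)
    (hXY : #(X \ Y) ≤ 4) (hP : P ⊆ smallSubsets Y k s) (hQ : Q ⊆ smallSubsets Y k s)
    (hPQ : CrossIntersecting P Q) (hP' : P' ⊆ smallSubsets Y k s) (hQ' : Q' ⊆ smallSubsets Y k s)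
    (hPQ' : CrossIntersecting P' Q') (hS : S ⊆ Y) (hS2 : #S = 2) :
    #(P ⊼ Q ∪ P' ⊼ Q') ≤ #(hittingSubsets Y k s S) := by
  have hYX : smallSubsets Y k s ⊆ smallSubsets X k s := smallSubsets_mono_left hY
  have hlarge := card_smallSubsets_le_card_hittingSubsets_of_card_eq_two (s := s) hX hY hXY hS hS2
  have hinfs := infs_subset_smallSubsets (Q := Q) hP
  have hinfs' := infs_subset_smallSubsets (Q := Q') hP'
  have hun := card_union_le (P ⊼ Q) (P' ⊼ Q')
  rcases exists_common_or_ten_mul_card_infs_le hX (hP.trans hYX) (hQ.trans hYX) hPQ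
    with ⟨w, hw⟩ | h <;>
  rcases exists_common_or_ten_mul_card_infs_le hX (hP'.trans hYX) (hQ'.trans hYX) hPQ'
    with ⟨w', hw'⟩ | h'
  · refine card_le_card_hittingSubsets (W := {w, w'}) (union_subset hinfs hinfs')
      (isTransversal_pair.2 fun D hD => ?_) (hS2 ▸ card_le_two) hS
    exact (mem_union.1 hD).imp (hw D) (hw' D)
  · have := card_le_of_forall_mem (hinfs.trans hYX) hw
    lia
  · have := card_le_of_forall_mem (hinfs'.trans hYX) hw'
    lia
  · lia

/-! ### Cross-intersecting graphs -/

section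

variable {E E' : Finset (Finset α)} {a b c d : α}

theorem eq_pair_of_mem_of_card_eq_two (hT : #T = 2) (hab : a ≠ b) (ha : a ∈ T) (hb : b ∈ T) :
    T = {a, b} :=
  (eq_of_subset_of_card_le (insert_subset ha (singleton_subset_iff.2 hb))
    (by rw [hT, card_pair hab])).symm

theorem exists_eq_pair_of_mem_of_card_eq_two (hT : #T = 2) (ha : a ∈ T) :
    ∃ b, a ≠ b ∧ T = {a, b} := by
  obtain ⟨b, hb, hba⟩ := exists_mem_ne (hT ▸ one_lt_two) a
  exact ⟨b, hba.symm, eq_pair_of_mem_of_card_eq_two hT hba.symm ha hb⟩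

theorem CrossIntersecting.pair_mem_of_path (hE' : ∀ e ∈ E', #e = 2)
    (hEE' : CrossIntersecting E E') (hno : ∀ v, ∃ e ∈ E', v ∉ e)
    (hab : {a, b} ∈ E) (hac : {a, c} ∈ E) (hbc : b ≠ c) : {b, c} ∈ E' := by
  obtain ⟨e, he, hae⟩ := hno a
  have hb := (isTransversal_pair.1 (hEE' _ hab) e he).resolve_left hae
  have hc := (isTransversal_pair.1 (hEE' _ hac) e he).resolve_left hae
  rwa [← eq_pair_of_mem_of_card_eq_two (hE' e he) hbc hb hc]

theorem CrossIntersecting.eq_pair_of_matching (hE' : ∀ e ∈ E', #e = 2)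
    (hEE' : CrossIntersecting E E') (hab : {a, b} ∈ E) (hcd : {c, d} ∈ E) (hac : a ≠ c)
    (had : a ≠ d) (hbc : b ≠ c) (hbd : b ≠ d) {e : Finset α} (he : e ∈ E') :
    e = {a, c} ∨ e = {a, d} ∨ e = {b, c} ∨ e = {b, d} := by
  have pair {x y : α} (hxy : x ≠ y) (hx : x ∈ e) (hy : y ∈ e) : e = {x, y} :=
    eq_pair_of_mem_of_card_eq_two (hE' e he) hxy hx hy
  have h₁ := isTransversal_pair.1 (hEE' _ hab) e he
  have h₂ := isTransversal_pair.1 (hEE' _ hcd) e he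
  tauto

theorem CrossIntersecting.perfect_matching_mem_of_matching (hE' : ∀ e ∈ E', #e = 2)
    (hEE' : CrossIntersecting E E') (hno : ∀ v, ∃ e ∈ E', v ∉ e)
    (hab : {a, b} ∈ E) (hcd : {c, d} ∈ E) (hac : a ≠ c) (had : a ≠ d) (hbc : b ≠ c)
    (hbd : b ≠ d) :
    ({a, c} ∈ E' ∧ {b, d} ∈ E') ∨ ({a, d} ∈ E' ∧ {b, c} ∈ E') := by
  have edge {e : Finset α} (he : e ∈ E') :=
    hEE'.eq_pair_of_matching hE' hab hcd hac had hbc hbd he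
  have avoid_a : {b, c} ∈ E' ∨ {b, d} ∈ E' := by
    obtain ⟨e, he, hv⟩ := hno a
    rcases edge he with rfl | rfl | rfl | rfl <;> simp_all
  have avoid_b : {a, c} ∈ E' ∨ {a, d} ∈ E' := by
    obtain ⟨e, he, hv⟩ := hno b
    rcases edge he with rfl | rfl | rfl | rfl <;> simp_all
  have avoid_c : {a, d} ∈ E' ∨ {b, d} ∈ E' := by
    obtain ⟨e, he, hv⟩ := hno c
    rcases edge he with rfl | rfl | rfl | rfl <;> simp_all
  have avoid_d : {a, c} ∈ E' ∨ {b, c} ∈ E' := by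
    obtain ⟨e, he, hv⟩ := hno d
    rcases edge he with rfl | rfl | rfl | rfl <;> simp_all
  tauto

theorem exists_triangle_or_matching [Nonempty α] (hE : ∀ e ∈ E, #e = 2)
    (hno : ∀ v, ∃ e ∈ E, v ∉ e) :
    (∃ a b c, a ≠ b ∧ a ≠ c ∧ b ≠ c ∧ {a, b} ∈ E ∧ {a, c} ∈ E ∧ {b, c} ∈ E) ∨
      ∃ a b c d, (a ≠ b ∧ a ≠ c ∧ a ≠ d ∧ b ≠ c ∧ b ≠ d ∧ c ≠ d) ∧ {a, b} ∈ E ∧ {c, d} ∈ E := by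
  obtain ⟨e, he, -⟩ := hno (Classical.arbitrary α)
  obtain ⟨a, b, hab, rfl⟩ := card_eq_two.1 (hE e he)
  have matching_of_disjoint {f : Finset α} (hf : f ∈ E) (haf : a ∉ f) (hbf : b ∉ f) :
      ∃ a b c d, (a ≠ b ∧ a ≠ c ∧ a ≠ d ∧ b ≠ c ∧ b ≠ d ∧ c ≠ d) ∧ {a, b} ∈ E ∧ {c, d} ∈ E := by
    obtain ⟨c, d, hcd, rfl⟩ := card_eq_two.1 (hE f hf)
    simp only [mem_insert, mem_singleton, not_or] at haf hbf
    exact ⟨a, b, c, d, ⟨hab, haf.1, haf.2, hbf.1, hbf.2, hcd⟩, he, hf⟩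
  obtain ⟨f, hf, haf⟩ := hno a
  obtain ⟨g, hg, hbg⟩ := hno b
  by_cases hbf : b ∈ f
  swap
  · exact .inr (matching_of_disjoint hf haf hbf)
  by_cases hag : a ∈ g
  swap
  · exact .inr (matching_of_disjoint hg hag hbg)
  obtain ⟨c, hbc, rfl⟩ := exists_eq_pair_of_mem_of_card_eq_two (hE f hf) hbf
  obtain ⟨d, had, rfl⟩ := exists_eq_pair_of_mem_of_card_eq_two (hE g hg) hag
  simp only [mem_insert, mem_singleton, not_or] at haf hbg
  by_cases hcd : c = d
  · subst hcd
    exact .inl ⟨a, b, c, hab, had, hbc, he, hg, hf⟩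
  · exact .inr ⟨b, c, a, d, ⟨hbc, hab.symm, hbg.2, Ne.symm haf.2, hcd, had⟩, hf, hg⟩

theorem CrossIntersecting.exists_triangle_or_alternating_cycle [Nonempty α]
    (hEE' : CrossIntersecting E E') (hE : ∀ e ∈ E, #e = 2) (hE' : ∀ e ∈ E', #e = 2)
    (hno : ∀ v, ∃ e ∈ E, v ∉ e) (hno' : ∀ v, ∃ e ∈ E', v ∉ e) :
    (∃ a b c, ({a, b} ∈ E ∧ {a, c} ∈ E ∧ {b, c} ∈ E) ∧
      {a, b} ∈ E' ∧ {a, c} ∈ E' ∧ {b, c} ∈ E') ∨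
    ∃ a b c d, (a ≠ b ∧ a ≠ c ∧ a ≠ d ∧ b ≠ c ∧ b ≠ d ∧ c ≠ d) ∧
      ({a, b} ∈ E ∧ {c, d} ∈ E) ∧ {a, c} ∈ E' ∧ {b, d} ∈ E' := by
  rcases exists_triangle_or_matching hE hno with
    ⟨a, b, c, hab, hac, hbc, habE, hacE, hbcE⟩ |
    ⟨a, b, c, d, ⟨hab, hac, had, hbc, hbd, hcd⟩, habE, hcdE⟩
  · have hbaE : {b, a} ∈ E := pair_comm a b ▸ habE
    have hcaE : {c, a} ∈ E := pair_comm a c ▸ hacE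
    have hcbE : {c, b} ∈ E := pair_comm b c ▸ hbcE
    exact .inl ⟨a, b, c, ⟨habE, hacE, hbcE⟩, hEE'.pair_mem_of_path hE' hno' hcaE hcbE hab,
      hEE'.pair_mem_of_path hE' hno' hbaE hbcE hac, hEE'.pair_mem_of_path hE' hno' habE hacE hbc⟩
  · rcases hEE'.perfect_matching_mem_of_matching hE' hno' habE hcdE hac had hbc hbd with h | h
    · exact .inr ⟨a, b, c, d, ⟨hab, hac, had, hbc, hbd, hcd⟩, ⟨habE, hcdE⟩, h⟩
    · exact .inr ⟨a, b, d, c, ⟨hab, had, hac, hbd, hbc, hcd.symm⟩,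
        ⟨habE, pair_comm c d ▸ hcdE⟩, h⟩

end

/-! ### Traces on a fixed set -/

/-- The parts outside `S` of the members of `U` whose trace on `S` is `T`. -/
def outerParts (U : Finset (Finset α)) (S T : Finset α) : Finset (Finset α) :=
  {u ∈ U | u ∩ S = T}.image (· \ S)

theorem mem_outerParts : p ∈ outerParts U S T ↔ ∃ u ∈ U, u ∩ S = T ∧ u \ S = p := by
  simp only [outerParts, mem_image, mem_filter, and_assoc]

theorem outerParts_subset_smallSubsets (hU : U ⊆ smallSubsets X k s) :
    outerParts U S T ⊆ smallSubsets (X \ S) k (#T + s) := by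
  intro p hp
  obtain ⟨u, hu, rfl, rfl⟩ := mem_outerParts.1 hp
  obtain ⟨huX, huk⟩ := mem_smallSubsets.1 (hU hu)
  have := card_sdiff_add_card_inter u S
  exact mem_smallSubsets.2 ⟨sdiff_subset_sdiff huX subset_rfl, by lia⟩

theorem CrossIntersecting.outerParts {T T' : Finset α} (hUV : CrossIntersecting U V)
    (hT : Disjoint T T') : CrossIntersecting (outerParts U S T) (outerParts V S T') := by
  intro p hp q hq
  obtain ⟨u, hu, rfl, rfl⟩ := mem_outerParts.1 hp
  obtain ⟨v, hv, rfl, rfl⟩ := mem_outerParts.1 hq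
  obtain ⟨w, hw⟩ := hUV u hu v hv
  obtain ⟨hwu, hwv⟩ := mem_inter.1 hw
  have hwS : w ∉ S := fun hwS =>
    disjoint_left.1 hT (mem_inter.2 ⟨hwu, hwS⟩) (mem_inter.2 ⟨hwv, hwS⟩)
  exact ⟨w, mem_inter.2 ⟨mem_sdiff.2 ⟨hwu, hwS⟩, mem_sdiff.2 ⟨hwv, hwS⟩⟩⟩

theorem inter_mem_infs_outerParts {u v : Finset α} (hu : u ∈ U) (hv : v ∈ V)
    (h : Disjoint (u ∩ v) S) :
    u ∩ v ∈ outerParts U S (u ∩ S) ⊼ outerParts V S (v ∩ S) :=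
  mem_infs_iff_exists_inter.2 ⟨u \ S, mem_outerParts.2 ⟨u, hu, rfl, rfl⟩,
    v \ S, mem_outerParts.2 ⟨v, hv, rfl, rfl⟩,
    inf_sdiff.symm.trans h.sdiff_eq_left⟩

section

variable {a b c d : α}

theorem inter_eq_pair_of_cycle {u v : Finset α} (huac : a ∈ u ∨ c ∈ u) (hubd : b ∈ u ∨ d ∈ u)
    (hvab : a ∈ v ∨ b ∈ v) (hvcd : c ∈ v ∨ d ∈ v) (h : Disjoint (u ∩ v) {a, b, c, d}) :
    u ∩ {a, b, c, d} = {a, d} ∧ v ∩ {a, b, c, d} = {b, c} ∨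
      u ∩ {a, b, c, d} = {b, c} ∧ v ∩ {a, b, c, d} = {a, d} := by
  simp only [disjoint_insert_right, disjoint_singleton_right, mem_inter, not_and] at h
  obtain ⟨ha, hb, hc, hd⟩ := h
  by_cases hau : a ∈ u
  · left; constructor <;> ext y <;> grind
  · right; constructor <;> ext y <;> grind

theorem mem_infs_outerParts_of_cycle (hac : IsTransversal {a, c} U) (hbd : IsTransversal {b, d} U)
    (hab : IsTransversal {a, b} V) (hcd : IsTransversal {c, d} V) (hD : D ∈ U ⊼ V)
    (hdisj : Disjoint D {a, b, c, d}) :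
    D ∈ outerParts U {a, b, c, d} {a, d} ⊼ outerParts V {a, b, c, d} {b, c} ∪
      outerParts U {a, b, c, d} {b, c} ⊼ outerParts V {a, b, c, d} {a, d} := by
  obtain ⟨u, hu, v, hv, rfl⟩ := mem_infs_iff_exists_inter.1 hD
  have hmem := inter_mem_infs_outerParts hu hv hdisj
  rw [isTransversal_pair] at hac hbd hab hcd
  rcases inter_eq_pair_of_cycle (hac u hu) (hbd u hu) (hab v hv) (hcd v hv) hdisj with
    ⟨htu, htv⟩ | ⟨htu, htv⟩ <;> rw [htu, htv] at hmem
  · exact mem_union_left _ hmem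
  · exact mem_union_right _ hmem

theorem card_le_add_of_cycle (hX : 100 * k ^ 2 ≤ #X) (h𝒟 : 𝒟 ⊆ U ⊼ V) (h𝒟X : 𝒟 ⊆ smallSubsets X k 1)
    (hU : U ⊆ smallSubsets X k 0) (hV : V ⊆ smallSubsets X k 0) (hUV : CrossIntersecting U V)
    (hne : a ≠ b ∧ a ≠ c ∧ a ≠ d ∧ b ≠ c ∧ b ≠ d ∧ c ≠ d) (hac : IsTransversal {a, c} U)
    (hbd : IsTransversal {b, d} U) (hab : IsTransversal {a, b} V) (hcd : IsTransversal {c, d} V)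
    (hT : T ⊆ X \ {a, b, c, d}) (hT2 : #T = 2) :
    #𝒟 ≤ #(hittingSubsets X k 1 {a, b, c, d}) +
      #(hittingSubsets (X \ {a, b, c, d}) k 2 T) := by
  set S : Finset α := {a, b, c, d}
  have : Nonempty α := ⟨a⟩
  have hdisj : Disjoint ({a, d} : Finset α) {b, c} := by
    simp only [disjoint_insert_left, disjoint_singleton_left, mem_insert, mem_singleton]
    tauto
  have hcover : 𝒟 ⊆ hittingSubsets X k 1 S ∪ (outerParts U S {a, d} ⊼ outerParts V S {b, c} ∪
      outerParts U S {b, c} ⊼ outerParts V S {a, d}) := fun D hD => by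
    by_cases hDS : Disjoint D S
    · exact mem_union_right _ (mem_infs_outerParts_of_cycle hac hbd hab hcd (h𝒟 hD) hDS)
    · exact mem_union_left _ (mem_hittingSubsets.2
        ⟨h𝒟X hD, inter_comm D S ▸ not_disjoint_iff_nonempty_inter.1 hDS⟩)
  have houter {W : Finset (Finset α)} {x y : α} (hW : W ⊆ smallSubsets X k 0) (hxy : x ≠ y) :
      outerParts W S {x, y} ⊆ smallSubsets (X \ S) k 2 :=
    (outerParts_subset_smallSubsets hW).trans_eq (by rw [card_pair hxy])
  have hremoved : #(X \ (X \ S)) ≤ 4 :=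
    (card_le_card sdiff_sdiff_le).trans card_le_four
  obtain ⟨-, -, had, hbc, -, -⟩ := hne
  have hcount := card_infs_union_infs_le hX sdiff_subset hremoved (houter hU had) (houter hV hbc)
    (hUV.outerParts hdisj) (houter hU hbc) (houter hV had) (hUV.outerParts hdisj.symm) hT hT2
  exact (card_le_card hcover).trans ((card_union_le _ _).trans (Nat.add_le_add_left hcount _))

theorem IsTransversal.infs_of_triangle (hUab : IsTransversal {a, b} U)
    (hUac : IsTransversal {a, c} U) (hUbc : IsTransversal {b, c} U)
    (hVab : IsTransversal {a, b} V) (hVac : IsTransversal {a, c} V)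
    (hVbc : IsTransversal {b, c} V) : IsTransversal {a, b, c} (U ⊼ V) := by
  intro D hD
  obtain ⟨u, hu, v, hv, rfl⟩ := mem_infs_iff_exists_inter.1 hD
  rw [isTransversal_pair] at hUab hUac hUbc hVab hVac hVbc
  have : a ∈ u ∧ a ∈ v ∨ b ∈ u ∧ b ∈ v ∨ c ∈ u ∧ c ∈ v := by
    grind
  rcases this with h | h | h <;> exact ⟨_, mem_inter.2 ⟨by simp, mem_inter.2 h⟩⟩

end

/-! ### Saturated pairs -/

theorem Unpinned.exists_card_eq_two_notMem [Nonempty α] (hs : Unpinned Q s) (hs2 : s ≤ 2)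
    (hQ : ∀ q ∈ Q, q ⊆ X) (hno : ∀ z, ∃ q ∈ Q, z ∉ q)
    (hP : ∀ T ⊆ X, #T = 2 → IsTransversal T Q → T ∈ P) (v : α) : ∃ e ∈ P, #e = 2 ∧ v ∉ e := by
  obtain ⟨T, hT, hTs, hvT⟩ := hs v
  have hTX : IsTransversal (T ∩ X) Q := fun q hq => by
    rw [inter_assoc, inter_eq_right.2 (hQ q hq)]
    exact hT q hq
  have hcard : #(T ∩ X) = 2 := le_antisymm
    ((card_le_card inter_subset_left).trans (hTs.trans hs2)) (hTX.two_le_card hno)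
  exact ⟨T ∩ X, hP _ inter_subset_right hcard hTX, hcard, fun hv => hvT (mem_inter.1 hv).1⟩

theorem exists_card_hittingSubsets_sdiff_eq {S' : Finset α} (k s : ℕ) (hS : S ⊆ X) (hS' : S' ⊆ X)
    (h : #S = #S') (hT : T ⊆ X \ S) :
    ∃ T' ⊆ X \ S', #T' = #T ∧
      #(hittingSubsets (X \ S) k s T) = #(hittingSubsets (X \ S') k s T') := by
  have hcard : #(X \ S) = #(X \ S') := by
    rw [card_sdiff_of_subset hS, card_sdiff_of_subset hS', h]
  obtain ⟨T', hT', hTT'⟩ := exists_subset_card_eq (hcard ▸ card_le_card hT)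
  exact ⟨T', hT', hTT', card_hittingSubsets_congr k s hT hT' hcard hTT'.symm⟩

theorem card_le_add_of_pairs [Nonempty α] (hX : 100 * k ^ 2 ≤ #X) (h𝒟 : 𝒟 ⊆ U ⊼ V)
    (h𝒟X : 𝒟 ⊆ smallSubsets X k 1) (hU : U ⊆ smallSubsets X k 0) (hV : V ⊆ smallSubsets X k 0)
    (hUV : CrossIntersecting U V) (hUpair : ∀ v, ∃ e ∈ U, #e = 2 ∧ v ∉ e)
    (hVpair : ∀ v, ∃ e ∈ V, #e = 2 ∧ v ∉ e)
    (hS : S ⊆ X) (hS4 : #S = 4) (hT : T ⊆ X \ S) (hT2 : #T = 2) :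
    #𝒟 ≤ #(hittingSubsets X k 1 S) + #(hittingSubsets (X \ S) k 2 T) := by
  have hEE' : CrossIntersecting {e ∈ U | #e = 2} {e ∈ V | #e = 2} :=
    hUV.mono (filter_subset _ _) (filter_subset _ _)
  have avoiding {W : Finset (Finset α)} (hW : ∀ v, ∃ e ∈ W, #e = 2 ∧ v ∉ e) (v : α) :
      ∃ e ∈ ({e ∈ W | #e = 2} : Finset (Finset α)), v ∉ e := by
    obtain ⟨e, he, he2, hv⟩ := hW v
    exact ⟨e, mem_filter.2 ⟨he, he2⟩, hv⟩
  rcases hEE'.exists_triangle_or_alternating_cycle (fun _ he => (mem_filter.1 he).2)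
    (fun _ he => (mem_filter.1 he).2) (avoiding hUpair) (avoiding hVpair) with
    ⟨a, b, c, hE, hE'⟩ | ⟨a, b, c, d, hne, hE, hE'⟩
  · simp only [mem_filter] at hE hE'
    have htri : IsTransversal {a, b, c} 𝒟 := (IsTransversal.infs_of_triangle (hUV.symm _ hE'.1.1)
      (hUV.symm _ hE'.2.1.1) (hUV.symm _ hE'.2.2.1) (hUV _ hE.1.1) (hUV _ hE.2.1.1)
      (hUV _ hE.2.2.1)).mono h𝒟
    exact Nat.le_add_right_of_le (card_le_card_hittingSubsets h𝒟X htri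
      (hS4 ▸ card_le_three.trans (by norm_num)) hS)
  · simp only [mem_filter] at hE hE'
    have hS'X : {a, b, c, d} ⊆ X := by
      have hab := (mem_smallSubsets.1 (hU hE.1.1)).1
      have hcd := (mem_smallSubsets.1 (hU hE.2.1)).1
      rw [insert_subset_iff, singleton_subset_iff] at hab hcd
      exact insert_subset hab.1 (insert_subset hab.2 (insert_subset hcd.1
        (singleton_subset_iff.2 hcd.2)))
    have hS'4 : #S = #{a, b, c, d} := by
      rw [hS4, eq_comm, card_eq_four]
      exact ⟨a, b, c, d, by tauto⟩
    obtain ⟨T', hT', hT'2, hTT'⟩ := exists_card_hittingSubsets_sdiff_eq k 2 hS hS'X hS'4 hT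
    rw [card_hittingSubsets_congr k 1 hS hS'X rfl hS'4, hTT']
    exact card_le_add_of_cycle hX h𝒟 h𝒟X hU hV hUV hne (hUV.symm _ hE'.1.1) (hUV.symm _ hE'.2.1)
      (hUV _ hE.1.1) (hUV _ hE.2.1) hT' (hT'2.trans hT2)

theorem card_le_add_of_saturated [Nonempty α] (hk : 2 ≤ k) (hX : 100 * k ^ 2 ≤ #X) (h𝒟 : 𝒟 ⊆ U ⊼ V)
    (h𝒟X : 𝒟 ⊆ smallSubsets X k 1) (hU : U ⊆ smallSubsets X k 0) (hV : V ⊆ smallSubsets X k 0)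
    (hUV : CrossIntersecting U V) (hUsat : ∀ T ⊆ X, #T = 2 → IsTransversal T V → T ∈ U)
    (hVsat : ∀ T ⊆ X, #T = 2 → IsTransversal T U → T ∈ V)
    (hS : S ⊆ X) (hS4 : #S = 4) (hT : T ⊆ X \ S) (hT2 : #T = 2) :
    #𝒟 ≤ #(hittingSubsets X k 1 S) + #(hittingSubsets (X \ S) k 2 T) := by
  have of_few (h : 100 * #𝒟 ≤ 390 * #(smallSubsets X k 2)) :
      #𝒟 ≤ #(hittingSubsets X k 1 S) + #(hittingSubsets (X \ S) k 2 T) := by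
    have := card_smallSubsets_le_card_hittingSubsets_of_card_eq_four hk hX hS hS4
    lia
  have h𝒟' : 𝒟 ⊆ V ⊼ U := infs_comm U V ▸ h𝒟
  by_cases hUx : ∃ x, ∀ u ∈ U, x ∈ u
  · obtain ⟨x, hx⟩ := hUx
    exact of_few (hundred_mul_card_le_of_forall_mem hX h𝒟 h𝒟X hU hV hUV hx)
  by_cases hVx : ∃ x, ∀ v ∈ V, x ∈ v
  · obtain ⟨x, hx⟩ := hVx
    exact of_few (hundred_mul_card_le_of_forall_mem hX h𝒟' h𝒟X hV hU hUV.symm hx)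
  push Not at hUx hVx
  obtain ⟨s, hs, x, hx⟩ := exists_unpinned_and_pin (hUV.exists_unpinned hUx)
  obtain ⟨t, ht, y, hy⟩ := exists_unpinned_and_pin (hUV.symm.exists_unpinned hVx)
  by_cases hst : 3 ≤ s ∨ 3 ≤ t
  · rcases le_total t s with hle | hle
    · exact of_few (hundred_mul_card_le_of_pin hX h𝒟 h𝒟X hU hV hUV ht hle (by lia) hx)
    · exact of_few (hundred_mul_card_le_of_pin hX h𝒟' h𝒟X hV hU hUV.symm hs hle (by lia) hy)
  · have hUX : ∀ u ∈ U, u ⊆ X := fun u hu => (mem_smallSubsets.1 (hU hu)).1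
    have hVX : ∀ v ∈ V, v ⊆ X := fun v hv => (mem_smallSubsets.1 (hV hv)).1
    exact card_le_add_of_pairs hX h𝒟 h𝒟X hU hV hUV
      (hs.exists_card_eq_two_notMem (by lia) hVX hVx hUsat)
      (ht.exists_card_eq_two_notMem (by lia) hUX hUx hVsat) hS hS4 hT hT2

/-! ### Intersections of distinct members -/

theorem exists_inter_eq {A B : Finset α} (hD : D ∈ smallSubsets X k s) (hs : 1 ≤ s) (hA : A ⊆ X)
    (hB : B ⊆ X) (hAB : A ∩ B ⊆ D) (hAD : #(A \ D) ≤ s) (hBD : #(B \ D) ≤ s) (hX : 2 * k ≤ #X) :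
    ∃ F ∈ powersetCard k X, ∃ G ∈ powersetCard k X, A ⊆ F ∧ B ⊆ G ∧ F ≠ G ∧ F ∩ G = D := by
  obtain ⟨hDX, hDk⟩ := mem_smallSubsets.1 hD
  have hAk : #(A ∪ D) ≤ k := by rw [← card_sdiff_add_card]; lia
  have hBk : #(B ∪ D) ≤ k := by rw [← card_sdiff_add_card]; lia
  have hA_avoid : A ∪ D ⊆ X \ (B \ D) := subset_sdiff.2 ⟨union_subset hA hDX,
    disjoint_union_left.2 ⟨disjoint_left.2 fun w hwA hwB =>
      (mem_sdiff.1 hwB).2 (hAB (mem_inter.2 ⟨hwA, (mem_sdiff.1 hwB).1⟩)), disjoint_sdiff⟩⟩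
  obtain ⟨F, hAF, hFX, hF⟩ := exists_subsuperset_card_eq hA_avoid hAk
    (by have := le_card_sdiff (B \ D) X; lia)
  have hFB := (subset_sdiff.1 hFX).2
  have hB_avoid : B ∪ D ⊆ X \ F ∪ D := by
    rw [← sdiff_union_self_eq_union]
    exact union_subset_union_left (subset_sdiff.2 ⟨sdiff_subset.trans hB, hFB.symm⟩)
  obtain ⟨G, hBG, hGX, hG⟩ := exists_subsuperset_card_eq hB_avoid hBk
    (by have := (le_card_sdiff F X).trans (card_le_card (subset_union_left (s₂ := D))); lia)
  have hFG : F ∩ G = D := by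
    refine subset_antisymm (fun w hw => ?_)
      (subset_inter (subset_union_right.trans hAF) (subset_union_right.trans hBG))
    obtain ⟨hwF, hwG⟩ := mem_inter.1 hw
    exact (mem_union.1 (hGX hwG)).resolve_left fun h => (mem_sdiff.1 h).2 hwF
  refine ⟨F, mem_powersetCard.2 ⟨hFX.trans sdiff_subset, hF⟩, G,
    mem_powersetCard.2 ⟨hGX.trans (union_subset sdiff_subset hDX), hG⟩,
    subset_union_left.trans hAF, subset_union_left.trans hBG, ?_, hFG⟩
  rintro rfl
  rw [inter_self] at hFG
  lia

theorem mem_dInt {F G : Finset (Finset ℕ)} {D : Finset ℕ} :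
    D ∈ dInt F G ↔ ∃ A ∈ F, ∃ B ∈ G, A ≠ B ∧ A ∩ B = D := by
  simp only [dInt, mem_image, mem_filter, mem_product, Prod.exists]
  tauto

theorem dInt_subset_infs (F G : Finset (Finset ℕ)) : dInt F G ⊆ F ⊼ G := fun D hD => by
  obtain ⟨A, hA, B, hB, -, rfl⟩ := mem_dInt.1 hD
  exact inter_mem_infs hA hB

theorem dInt_subset_smallSubsets {X : Finset ℕ} {F G : Finset (Finset ℕ)}
    (hF : F ⊆ smallSubsets X k s) (hG : G ⊆ smallSubsets X k s) :
    dInt F G ⊆ smallSubsets X k (s + 1) := fun D hD => by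
  obtain ⟨A, hA, B, hB, hne, rfl⟩ := mem_dInt.1 hD
  obtain ⟨hAX, hAk⟩ := mem_smallSubsets.1 (hF hA)
  obtain ⟨-, hBk⟩ := mem_smallSubsets.1 (hG hB)
  have hlt : #(A ∩ B) < max #A #B := by
    rw [lt_max_iff]
    by_contra! h
    exact hne ((eq_of_subset_of_card_le inter_subset_left h.1).symm.trans
      (eq_of_subset_of_card_le inter_subset_right h.2))
  exact mem_smallSubsets.2 ⟨inter_subset_left.trans hAX, by lia⟩

theorem dInt_eq_empty {F G : Finset (Finset ℕ)} (hF : ∀ A ∈ F, #A ≤ 1) (hG : ∀ B ∈ G, #B ≤ 1)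
    (hFG : crossInt F G) : dInt F G = ∅ := by
  refine eq_empty_of_forall_notMem fun D hD => ?_
  obtain ⟨A, hA, B, hB, hne, -⟩ := mem_dInt.1 hD
  have hAB := card_pos.2 (hFG A hA B hB)
  exact hne ((eq_of_subset_of_card_le inter_subset_left ((hF A hA).trans hAB)).symm.trans
    (eq_of_subset_of_card_le inter_subset_right ((hG B hB).trans hAB)))

theorem mem_transv {n k : ℕ} {H : Finset (Finset ℕ)} {T : Finset ℕ} :
    T ∈ transv n k H ↔ T ∈ smallSubsets (ground n) k 0 ∧ IsTransversal T H := by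
  simp only [transv, smallSubsets, IsTransversal, mem_filter, mem_powerset, add_zero, and_assoc]

theorem transv_subset_smallSubsets (n k : ℕ) (H : Finset (Finset ℕ)) :
    transv n k H ⊆ smallSubsets (ground n) k 0 := fun _ hT => (mem_transv.1 hT).1

theorem crossIntersecting_transv (n k : ℕ) (H : Finset (Finset ℕ)) :
    CrossIntersecting (transv n k H) H := fun _ hT => (mem_transv.1 hT).2

theorem CrossIntersecting.subset_transv {n k : ℕ} {F G : Finset (Finset ℕ)}
    (hFG : CrossIntersecting F G) (hF : F ⊆ smallSubsets (ground n) k 0) : F ⊆ transv n k G :=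
  fun A hA => mem_transv.2 ⟨hF hA, hFG A hA⟩

/-! ### The extremal pair -/

/-- The sets whose stars make up `A1`. -/
def generators₁ : Finset (Finset ℕ) := {{1, 2}, {3, 4}, {1, 4, 5}, {2, 3, 6}}

/-- The sets whose stars make up `A2`. -/
def generators₂ : Finset (Finset ℕ) := {{1, 3}, {2, 4}, {1, 4, 6}, {2, 3, 5}}

theorem mem_A1 {n k : ℕ} {F : Finset ℕ} :
    F ∈ A1 n k ↔ F ∈ ksets n k ∧ ∃ T ∈ generators₁, T ⊆ F := by
  simp only [A1, starF, generators₁, mem_union, mem_filter, mem_insert, mem_singleton,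
    exists_eq_or_imp, exists_eq_left]
  tauto

theorem mem_A2 {n k : ℕ} {F : Finset ℕ} :
    F ∈ A2 n k ↔ F ∈ ksets n k ∧ ∃ T ∈ generators₂, T ⊆ F := by
  simp only [A2, starF, generators₂, mem_union, mem_filter, mem_insert, mem_singleton,
    exists_eq_or_imp, exists_eq_left]
  tauto

theorem subset_ground_of_mem_generators {n : ℕ} (hn : 6 ≤ n) {T : Finset ℕ}
    (hT : T ∈ generators₁ ∪ generators₂) : T ⊆ ground n :=
  have : ∀ T ∈ generators₁ ∪ generators₂, T ⊆ Icc 1 6 := by decide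
  (this T hT).trans (Icc_subset_Icc_right hn)

theorem card_ground (n : ℕ) : #(ground n) = n := by
  rw [ground, Nat.card_Icc, Nat.add_sub_cancel]

theorem mem_dInt_A1_A2 {n w : ℕ} {A B D : Finset ℕ} (hn : 6 ≤ n) (hkn : 2 * k ≤ n) (hs : 1 ≤ s)
    (hD : D ∈ smallSubsets (ground n) k s) (hw : w ∈ D) (hA : A ∈ generators₁)
    (hB : B ∈ generators₂) (hAB : A ∩ B = {w}) (hAs : #A ≤ s + 1) (hBs : #B ≤ s + 1) :
    D ∈ dInt (A1 n k) (A2 n k) := by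
  have hwAB : w ∈ A ∩ B := hAB ▸ mem_singleton_self w
  have card_sdiff_le_of_mem {T : Finset ℕ} (hwT : w ∈ T) (hT : #T ≤ s + 1) : #(T \ D) ≤ s :=
    Nat.le_of_lt_succ ((card_lt_card (ssubset_iff_of_subset sdiff_subset |>.2
      ⟨w, hwT, fun h => (mem_sdiff.1 h).2 hw⟩)).trans_le hT)
  obtain ⟨F, hF, G, hG, hAF, hBG, hne, hFG⟩ := exists_inter_eq hD hs
    (subset_ground_of_mem_generators hn (mem_union_left _ hA))
    (subset_ground_of_mem_generators hn (mem_union_right _ hB))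
    (hAB ▸ singleton_subset_iff.2 hw) (card_sdiff_le_of_mem (mem_inter.1 hwAB).1 hAs)
    (card_sdiff_le_of_mem (mem_inter.1 hwAB).2 hBs) (hkn.trans (card_ground n).ge)
  exact mem_dInt.2 ⟨F, mem_A1.2 ⟨hF, A, hA, hAF⟩, G, mem_A2.2 ⟨hG, B, hB, hBG⟩, hne, hFG⟩

theorem hittingSubsets_subset_dInt_A1_A2 {n : ℕ} (hn : 6 ≤ n) (hkn : 2 * k ≤ n) :
    hittingSubsets (ground n) k 1 {1, 2, 3, 4} ⊆ dInt (A1 n k) (A2 n k) := by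
  intro D hD
  obtain ⟨hDX, w, hw⟩ := mem_hittingSubsets.1 hD
  have mem {w : ℕ} {A B : Finset ℕ} := mem_dInt_A1_A2 (w := w) (A := A) (B := B) hn hkn le_rfl hDX
  simp only [mem_inter, mem_insert, mem_singleton] at hw
  obtain ⟨rfl | rfl | rfl | rfl, hw⟩ := hw
  · exact mem (A := {1, 2}) (B := {1, 3}) hw (by decide) (by decide) (by decide) le_rfl le_rfl
  · exact mem (A := {1, 2}) (B := {2, 4}) hw (by decide) (by decide) (by decide) le_rfl le_rfl
  · exact mem (A := {3, 4}) (B := {1, 3}) hw (by decide) (by decide) (by decide) le_rfl le_rfl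
  · exact mem (A := {3, 4}) (B := {2, 4}) hw (by decide) (by decide) (by decide) le_rfl le_rfl

theorem hittingSubsets_sdiff_subset_dInt_A1_A2 {n : ℕ} (hn : 6 ≤ n) (hkn : 2 * k ≤ n) :
    hittingSubsets (ground n \ {1, 2, 3, 4}) k 2 {5, 6} ⊆ dInt (A1 n k) (A2 n k) := by
  intro D hD
  obtain ⟨hDX, w, hw⟩ := mem_hittingSubsets.1 hD
  replace hDX := smallSubsets_mono_left sdiff_subset hDX
  have mem {w : ℕ} {A B : Finset ℕ} :=
    mem_dInt_A1_A2 (w := w) (A := A) (B := B) hn hkn one_le_two hDX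
  simp only [mem_inter, mem_insert, mem_singleton] at hw
  obtain ⟨rfl | rfl, hw⟩ := hw
  · exact mem (A := {1, 4, 5}) (B := {2, 3, 5}) hw (by decide) (by decide) (by decide) le_rfl le_rfl
  · exact mem (A := {2, 3, 6}) (B := {1, 4, 6}) hw (by decide) (by decide) (by decide) le_rfl le_rfl

theorem card_hittingSubsets_add_le_card_dInt {n : ℕ} (hn : 6 ≤ n) (hkn : 2 * k ≤ n) :
    #(hittingSubsets (ground n) k 1 {1, 2, 3, 4}) +
      #(hittingSubsets (ground n \ {1, 2, 3, 4}) k 2 {5, 6}) ≤ #(dInt (A1 n k) (A2 n k)) := by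
  rw [← card_union_of_disjoint]
  · exact card_le_card (union_subset (hittingSubsets_subset_dInt_A1_A2 hn hkn)
      (hittingSubsets_sdiff_subset_dInt_A1_A2 hn hkn))
  · refine disjoint_left.2 fun D hD hD' => ?_
    obtain ⟨-, w, hw⟩ := mem_hittingSubsets.1 hD
    obtain ⟨hwS, hwD⟩ := mem_inter.1 hw
    exact (mem_sdiff.1 ((mem_smallSubsets.1 (mem_hittingSubsets.1 hD').1).1 hwD)).2 hwS

theorem stmt3_general (n k : ℕ) (hn : 100 * k ^ 2 ≤ n) (F G : Finset (Finset ℕ))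
    (hF : ∀ A ∈ F, A ⊆ ground n ∧ #A ≤ k) (hG : ∀ B ∈ G, B ⊆ ground n ∧ #B ≤ k)
    (hFG : crossInt F G) : #(dInt F G) ≤ #(dInt (A1 n k) (A2 n k)) := by
  rcases Nat.lt_or_ge k 2 with hk | hk
  · rw [dInt_eq_empty (fun A hA => by have := (hF A hA).2; lia)
      (fun B hB => by have := (hG B hB).2; lia) hFG, card_empty]
    exact Nat.zero_le _
  have hkn : 200 * k ≤ n := by nlinarith
  have hFX : F ⊆ smallSubsets (ground n) k 0 := fun A hA => mem_smallSubsets.2 (hF A hA)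
  have hGX : G ⊆ smallSubsets (ground n) k 0 := fun B hB => mem_smallSubsets.2 (hG B hB)
  set U := transv n k G
  set V := transv n k U
  have hFU : F ⊆ U := CrossIntersecting.subset_transv hFG hFX
  have hGV : G ⊆ V := (crossIntersecting_transv n k G).symm.subset_transv hGX
  have hUV : CrossIntersecting U V := (crossIntersecting_transv n k U).symm
  have hSX : Icc 1 6 ⊆ ground n := Icc_subset_Icc_right (by lia)
  refine (card_le_add_of_saturated hk (hn.trans (card_ground n).ge)
    ((dInt_subset_infs F G).trans (infs_subset hFU hGV)) (dInt_subset_smallSubsets hFX hGX)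
    (transv_subset_smallSubsets n k G) (transv_subset_smallSubsets n k U) hUV
    (fun T hT hT2 hTV => mem_transv.2 ⟨mem_smallSubsets.2 ⟨hT, hT2 ▸ hk⟩, hTV.mono hGV⟩)
    (fun T hT hT2 hTU => mem_transv.2 ⟨mem_smallSubsets.2 ⟨hT, hT2 ▸ hk⟩, hTU⟩)
    (S := {1, 2, 3, 4}) (T := {5, 6}) ((show _ ⊆ Icc 1 6 by decide).trans hSX) rfl
    (subset_sdiff.2 ⟨(show _ ⊆ Icc 1 6 by decide).trans hSX, by decide⟩) rfl).trans
    (card_hittingSubsets_add_le_card_dInt (by lia) (by lia))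

end

theorem stmt3 (n k : ℕ) (hn : 100 * k ^ 2 ≤ n)
    (F G : Finset (Finset ℕ)) (hF : F ⊆ ksets n k) (hG : G ⊆ ksets n k)
    (hcross : crossInt F G) :
    (dInt F G).card ≤ (dInt (A1 n k) (A2 n k)).card :=
  stmt3_general n k hn F G (fun _ hA => (mem_powersetCard.1 (hF hA)).imp_right le_of_eq)
    (fun _ hB => (mem_powersetCard.1 (hG hB)).imp_right le_of_eq) hcross
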